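/- arXiv:1804.09791 — 4 statements merged into one kernel-verified Lean document; each statement's English description precedes it below -/
import Mathlib

section
/- Let n ≥ 12, set p = 2 ln(n)/n, and let S ⊆ ℝ be a finite nonempty set. Form a random n×n matrix M with mutually independent entries, where each entry equals a uniformly random element of S with probability p and equals 0 with probability 1 − p. Then the probability that M is invertible is at least (1 − n²/|S|)·(1 − (ln n)²/n). In particular, the p-Bernoulli code with p = 2 ln(n)/n achieves the probabilistic recovery threshold n with average computation load 2 ln(n) per worker. -/
open MeasureTheory

/-!
If the support pattern of `M` contains a permutation, then the determinant, as a polynomial in the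
entries of the support, is nonzero of degree at most `n`, so by Schwartz–Zippel it vanishes at a
uniformly random point of the grid over `S` with probability at most `n / |S|`. By Hall's theorem, a
pattern without a permutation has an all-zero block with `a + 1` rows and `n - a` columns for some
`a < n`. The expected number of such blocks is
`∑ a, C(n, a + 1) C(n, a) (1 - p) ^ ((a + 1) (n - a))`, which is at most `(log n)² / n`: the sum is
symmetric under `a ↦ n - 1 - a`, and for `n ≥ 81` its first half is dominated by
`∑ a, (a + 1) (16 / 25) ^ a / n`; the remaining `n` are finitely many and are checked in integer
arithmetic after replacing `log n` by a rational lower bound.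
-/

open Finset ProbabilityTheory
open scoped ENNReal NNReal Nat

section BlockSum

/-- The expected number of all-zero blocks with `a + 1` rows and `n - a` columns in an `n × n`
matrix whose entries vanish independently with probability `q`. -/
def blockTerm {R : Type*} [Semiring R] (n : ℕ) (q : R) (a : ℕ) : R :=
  n.choose (a + 1) * n.choose a * q ^ ((a + 1) * (n - a))

/-- The expected number of all-zero blocks that prevent an `n × n` matrix from having a permutation
in its support, when its entries vanish independently with probability `q`. The semiring is
arbitrary so that real estimates transfer to `ℝ≥0∞`. -/
def blockSum {R : Type*} [Semiring R] (n : ℕ) (q : R) : R :=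
  ∑ a ∈ range n, blockTerm n q a

lemma map_blockSum {R R' : Type*} [Semiring R] [Semiring R'] (f : R →+* R') (n : ℕ) (q : R) :
    f (blockSum n q) = blockSum n (f q) := by
  simp only [blockSum, blockTerm, map_sum, map_mul, map_pow, map_natCast]

lemma ofReal_blockSum_coe (n : ℕ) (q : ℝ≥0) :
    ENNReal.ofReal (blockSum n (q : ℝ)) = blockSum n (q : ℝ≥0∞) :=
  calc ENNReal.ofReal (blockSum n (q : ℝ)) = ENNReal.ofReal (blockSum n q : ℝ≥0) := by
        congr 1
        exact (map_blockSum NNReal.toRealHom n q).symm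
    _ = (blockSum n q : ℝ≥0) := ENNReal.ofReal_coe_nnreal
    _ = blockSum n (q : ℝ≥0∞) := map_blockSum ENNReal.ofNNRealHom n q

lemma blockTerm_reflect {R : Type*} [CommSemiring R] {n a : ℕ} (q : R) (ha : a < n) :
    blockTerm n q (n - 1 - a) = blockTerm n q a := by
  have hsucc : n - 1 - a + 1 = n - a := by omega
  have hsub : n - (n - 1 - a) = a + 1 := by omega
  have hchoose : n.choose (n - 1 - a) = n.choose (a + 1) := by
    rw [← hsub, Nat.choose_symm (by omega)]
  rw [blockTerm, blockTerm, hsucc, hsub, hchoose, Nat.choose_symm ha.le, mul_comm (n - a),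
    mul_comm (n.choose a : R)]

lemma blockSum_mono {R : Type*} [Semiring R] [PartialOrder R] [IsOrderedRing R] {n : ℕ} {q q' : R}
    (hq : 0 ≤ q) (hqq' : q ≤ q') : blockSum n q ≤ blockSum n q' := by
  unfold blockSum blockTerm
  gcongr

lemma blockSum_div_mul_pow {F : Type*} [Field F] (n : ℕ) (s : F) {d : F} (hd : d ≠ 0) :
    blockSum n (s / d) * d ^ n ^ 2 = ∑ a ∈ range n, n.choose (a + 1) * n.choose a *
      (s ^ ((a + 1) * (n - a)) * d ^ (n ^ 2 - (a + 1) * (n - a))) := by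
  rw [blockSum, sum_mul]
  refine sum_congr rfl fun a ha => ?_
  have hle : (a + 1) * (n - a) ≤ n ^ 2 :=
    (Nat.mul_le_mul (mem_range.1 ha) (Nat.sub_le n a)).trans_eq (sq n).symm
  rw [blockTerm, div_pow, pow_sub₀ _ hd hle]
  field_simp

end BlockSum

section Log

lemma log_le_half {x : ℝ} (hx : 0 < x) : Real.log x ≤ x / 2 := by
  have h := Real.two_mul_le_exp (x := Real.log x)
  rw [Real.exp_log hx] at h
  linarith

lemma sq_log_le_self {x : ℝ} (hx : 1 ≤ x) : Real.log x ^ 2 ≤ x := by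
  have hx0 : 0 ≤ x := by linarith
  have hlog : Real.log x ≤ √x := by
    have h := log_le_half (Real.sqrt_pos.2 (by linarith : 0 < x))
    rw [Real.log_sqrt hx0] at h
    linarith
  calc Real.log x ^ 2 ≤ √x ^ 2 := by gcongr; exact Real.log_nonneg hx
    _ = x := Real.sq_sqrt hx0

lemma sq_log_div_self_le_one {x : ℝ} (hx : 1 ≤ x) : Real.log x ^ 2 / x ≤ 1 :=
  div_le_one_of_le₀ (sq_log_le_self hx) (by linarith)

lemma two_mul_log_div_self_mem_unitInterval (n : ℕ) : 2 * Real.log n / n ∈ unitInterval := by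
  have hlog : 0 ≤ Real.log n := Real.log_natCast_nonneg n
  refine ⟨by positivity, ?_⟩
  rcases n.eq_zero_or_pos with rfl | hn
  · simp
  · rw [div_le_one (by positivity)]
    linarith [log_le_half (x := n) (by positivity)]

-- Since `2 / 3 ≤ log 2`, we have `log n ≥ (2 / 3) * log₂ (n ^ 4) / 4`.
lemma log2_pow_four_div_six_le_log (n : ℕ) : (Nat.log2 (n ^ 4) : ℝ) / 6 ≤ Real.log n := by
  rcases n.eq_zero_or_pos with rfl | hn
  · simp
  have hpow : (2 : ℝ) ^ Nat.log2 (n ^ 4) ≤ (n : ℝ) ^ 4 := by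
    exact_mod_cast Nat.log2_self_le (by positivity)
  have hlog := Real.log_le_log (by positivity) hpow
  rw [Real.log_pow, Real.log_pow] at hlog
  have htwo : (2 / 3 : ℝ) ≤ Real.log 2 := by linarith [Real.log_two_gt_d9]
  have hmul : (Nat.log2 (n ^ 4) : ℝ) * (2 / 3) ≤ Nat.log2 (n ^ 4) * Real.log 2 := by gcongr
  push_cast at hlog
  linarith

-- Bernoulli's inequality for `√x ^ (2 * t)`.
lemma rpow_le_one_add_sqrt_sub_one {x t : ℝ} (hx : 0 ≤ x) (ht₀ : 0 ≤ t) (ht : t ≤ 1 / 2) :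
    x ^ t ≤ 1 + 2 * t * (√x - 1) := by
  have h := rpow_one_add_le_one_add_mul_self (s := √x - 1) (p := 2 * t)
    (by linarith [Real.sqrt_nonneg x]) (by linarith) (by linarith)
  rwa [add_sub_cancel, Real.rpow_mul (Real.sqrt_nonneg x), Real.rpow_two, Real.sq_sqrt hx] at h

lemma four_le_log {x : ℝ} (hx : 81 ≤ x) : 4 ≤ Real.log x := by
  rw [Real.le_log_iff_exp_le (by linarith)]
  calc Real.exp 4 = Real.exp 1 ^ 4 := by rw [← Real.exp_nat_mul]; norm_num
    _ ≤ 3 ^ 4 := by gcongr; exact Real.exp_one_lt_three.le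
    _ ≤ x := by linarith

end Log

section BlockSumBound

lemma sum_mul_le_log2_sq_mul : ∀ n ∈ Ico 3 81,
    (∑ a ∈ range n, n.choose (a + 1) * n.choose a *
      ((3 * n - Nat.log2 (n ^ 4)) ^ ((a + 1) * (n - a)) *
        (3 * n) ^ (n ^ 2 - (a + 1) * (n - a)))) * (36 * n) ≤
        Nat.log2 (n ^ 4) ^ 2 * (3 * n) ^ n ^ 2 := by
  -- Evaluating the recursion of `Nat.choose` naively takes exponentially many steps.
  simp only [Nat.choose_eq_descFactorial_div_factorial]
  decide +kernel

lemma blockSum_le_of_lt {n : ℕ} (hn : 3 ≤ n) (hn' : n < 81) :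
    blockSum n (1 - 2 * Real.log n / n) ≤ Real.log n ^ 2 / n := by
  set k := Nat.log2 (n ^ 4)
  have hlog : (k : ℝ) / 6 ≤ Real.log n := log2_pow_four_div_six_le_log n
  have : (0 : ℝ) < n := by positivity
  have hsub : (3 * n - k : ℝ) ≤ (3 * n - k : ℕ) := by
    rw [sub_le_iff_le_add]
    exact_mod_cast le_tsub_add
  have hcheck : blockSum n ((3 * n - k : ℕ) / (3 * n) : ℝ) * (3 * n) ^ n ^ 2 * (36 * n) ≤
      k ^ 2 * (3 * n) ^ n ^ 2 := by
    rw [blockSum_div_mul_pow n _ (by positivity)]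
    exact_mod_cast sum_mul_le_log2_sq_mul n (mem_Ico.2 ⟨hn, hn'⟩)
  calc blockSum n (1 - 2 * Real.log n / n)
      ≤ blockSum n ((3 * n - k : ℕ) / (3 * n) : ℝ) := by
        apply blockSum_mono
        · linarith [(two_mul_log_div_self_mem_unitInterval n).2]
        · calc 1 - 2 * Real.log n / n ≤ 1 - 2 * (k / 6) / n := by gcongr
            _ = (3 * n - k) / (3 * n) := by field_simp; ring
            _ ≤ (3 * n - k : ℕ) / (3 * n) := by gcongr
    _ ≤ (k / 6) ^ 2 / n := by
        have hpow : (0 : ℝ) < (3 * n) ^ n ^ 2 := by positivity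
        rw [mul_right_comm] at hcheck
        rw [div_pow, div_div, le_div_iff₀ (by positivity)]
        linarith [le_of_mul_le_mul_right hcheck hpow]
    _ ≤ Real.log n ^ 2 / n := by gcongr

lemma one_add_inv_pow_le (a : ℕ) : (1 + 1 / (a + 5 : ℝ)) ^ (a + 1) ≤ 4 * (a + 2) / (a + 6) := by
  set t : ℝ := (a + 1) / (a + 5) with ht
  have hexp : (1 - t / 2) ^ 2 * Real.exp t ≤ 1 := by
    have hnonneg : 0 ≤ 1 - t / 2 := by rw [ht]; field_simp; linarith [(a.cast_nonneg : (0 : ℝ) ≤ a)]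
    have hle : 1 - t / 2 ≤ Real.exp (-(t / 2)) := by linarith [Real.add_one_le_exp (-(t / 2))]
    calc (1 - t / 2) ^ 2 * Real.exp t ≤ Real.exp (-(t / 2)) ^ 2 * Real.exp t := by gcongr
      _ = 1 := by
        rw [← Real.exp_nat_mul, ← Real.exp_add, Real.exp_eq_one_iff]
        push_cast
        ring
  calc (1 + 1 / (a + 5 : ℝ)) ^ (a + 1) ≤ Real.exp (1 / (a + 5)) ^ (a + 1) := by
        gcongr
        linarith [Real.add_one_le_exp (1 / (a + 5 : ℝ))]
    _ = Real.exp t := by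
        rw [← Real.exp_nat_mul, ht]
        push_cast
        ring_nf
    _ ≤ 4 * (a + 2) / (a + 6) := by
        have ha : (0 : ℝ) ≤ a := a.cast_nonneg
        have hsub : 1 - t / 2 = (a + 9) / (2 * (a + 5)) := by rw [ht]; field_simp; ring
        rw [hsub, ← le_div_iff₀' (by positivity)] at hexp
        refine hexp.trans ?_
        rw [div_pow, one_div_div, div_le_div_iff₀ (by positivity) (by positivity)]
        nlinarith [sq_nonneg (a : ℝ), pow_nonneg ha 3]

lemma add_five_pow_le_factorial (a : ℕ) :
    (a + 5 : ℝ) ^ (a + 1) ≤ 5 * 4 ^ a * (a + 1)! := by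
  induction a with
  | zero => norm_num
  | succ a ih =>
    have hratio := one_add_inv_pow_le a
    have hmul : (1 + 1 / (a + 5 : ℝ)) * (a + 5) = a + 6 := by field_simp; ring
    calc ((a + 1 : ℕ) + 5 : ℝ) ^ (a + 1 + 1)
        = (a + 6) * (1 + 1 / (a + 5 : ℝ)) ^ (a + 1) * (a + 5) ^ (a + 1) := by
          rw [mul_assoc, ← mul_pow, hmul]
          push_cast
          ring
      _ ≤ (a + 6) * (4 * (a + 2) / (a + 6)) * (5 * 4 ^ a * (a + 1)!) := by gcongr
      _ = 5 * 4 ^ (a + 1) * (a + 1 + 1)! := by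
          rw [Nat.factorial_succ (a + 1)]
          push_cast
          field_simp
          ring

lemma mul_blockTerm_le {n a : ℕ} (ha : a < n) :
    n * blockTerm n (1 - 2 * Real.log n / n) a ≤
      (a + 1) * (((n : ℝ) ^ (a / n : ℝ)) ^ (a + 1) / (a + 1)!) ^ 2 := by
  have hn : (0 : ℝ) < n := by exact_mod_cast Nat.zero_lt_of_lt ha
  set y : ℝ := (n : ℝ) ^ (a / n : ℝ) with hy
  have hq₀ : 0 ≤ 1 - 2 * Real.log n / n :=
    sub_nonneg.2 (two_mul_log_div_self_mem_unitInterval n).2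
  have hq : 1 - 2 * Real.log n / n ≤ (n : ℝ) ^ (-2 / n : ℝ) := by
    have h := Real.add_one_le_exp (Real.log n * (-2 / n))
    rw [Real.rpow_def_of_pos hn]
    refine le_trans (le_of_eq ?_) h
    ring
  have hpow : ((n : ℝ) ^ (-2 / n : ℝ)) ^ ((a + 1) * (n - a)) =
      (y ^ (a + 1)) ^ 2 / (n : ℝ) ^ (2 * (a + 1)) := by
    simp only [hy, ← Real.rpow_natCast, ← Real.rpow_mul hn.le, ← Real.rpow_sub hn]
    congr 1
    push_cast [Nat.cast_sub ha.le]
    field_simp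
    ring
  have hchoose := Nat.choose_le_pow_div (α := ℝ) (a + 1) n
  have hchoose' := Nat.choose_le_pow_div (α := ℝ) a n
  calc n * blockTerm n (1 - 2 * Real.log n / n) a
      ≤ n * ((n : ℝ) ^ (a + 1) / (a + 1)! * ((n : ℝ) ^ a / a !) *
          ((n : ℝ) ^ (-2 / n : ℝ)) ^ ((a + 1) * (n - a))) := by
        unfold blockTerm
        gcongr
    _ = (a + 1) * (y ^ (a + 1) / (a + 1)!) ^ 2 := by
        rw [hpow, Nat.factorial_succ]
        push_cast
        field_simp
        ring

lemma mul_blockTerm_le_geometric {n a : ℕ} (hn : 81 ≤ n) (ha : 2 * a + 1 ≤ n) :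
    n * blockTerm n (1 - 2 * Real.log n / n) a ≤ (a + 1) * (16 / 25 : ℝ) ^ a := by
  have hn' : (81 : ℝ) ≤ n := by exact_mod_cast hn
  have ha' : 2 * (a : ℝ) ≤ n := by exact_mod_cast (by omega : 2 * a ≤ n)
  have hsqrt : 9 ≤ √(n : ℝ) := Real.le_sqrt_of_sq_le (by linarith)
  have hy : (n : ℝ) ^ (a / n : ℝ) ≤ (a + 5) / 5 := by
    have h := rpow_le_one_add_sqrt_sub_one (x := n) (t := a / n) (by positivity) (by positivity)
      (by rw [div_le_div_iff₀ (by linarith) two_pos]; linarith)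
    refine h.trans ?_
    have hsq : √(n : ℝ) ^ 2 = n := Real.sq_sqrt (by positivity)
    have hdiv : (√(n : ℝ) - 1) / n ≤ 1 / 10 := by
      rw [div_le_div_iff₀ (by linarith) (by norm_num)]
      nlinarith
    calc 1 + 2 * (a / n : ℝ) * (√n - 1) = 1 + 2 * a * ((√n - 1) / n) := by ring
      _ ≤ 1 + 2 * a * (1 / 10) := by gcongr
      _ = (a + 5) / 5 := by ring
  have hb : ((n : ℝ) ^ (a / n : ℝ)) ^ (a + 1) / (a + 1)! ≤ (4 / 5) ^ a := by
    have hfact := add_five_pow_le_factorial a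
    rw [div_le_iff₀ (by positivity)]
    calc ((n : ℝ) ^ (a / n : ℝ)) ^ (a + 1) ≤ ((a + 5) / 5) ^ (a + 1) := by gcongr
      _ ≤ 5 * 4 ^ a * (a + 1)! / 5 ^ (a + 1) := by rw [div_pow]; gcongr
      _ = (4 / 5) ^ a * (a + 1)! := by rw [div_pow, pow_succ]; field_simp
  calc n * blockTerm n (1 - 2 * Real.log n / n) a
      ≤ (a + 1) * (((n : ℝ) ^ (a / n : ℝ)) ^ (a + 1) / (a + 1)!) ^ 2 :=
        mul_blockTerm_le (by omega)
    _ ≤ (a + 1) * ((4 / 5) ^ a) ^ 2 := by gcongr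
    _ = (a + 1) * (16 / 25 : ℝ) ^ a := by rw [← pow_mul, mul_comm a, pow_mul]; norm_num

lemma sum_succ_mul_geometric_le {r : ℝ} (hr₀ : 0 ≤ r) (hr : r < 1) (n : ℕ) :
    ∑ a ∈ range n, (a + 1) * r ^ a ≤ 1 / (1 - r) ^ 2 := by
  have hsum := hasSum_choose_mul_geometric_of_norm_lt_one 1
    (by rwa [Real.norm_of_nonneg hr₀] : ‖r‖ < 1)
  simp only [Nat.choose_one_right, Nat.cast_add, Nat.cast_one] at hsum
  exact sum_le_hasSum _ (fun a _ => by positivity) hsum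

lemma blockSum_le_of_ge {n : ℕ} (hn : 81 ≤ n) :
    blockSum n (1 - 2 * Real.log n / n) ≤ Real.log n ^ 2 / n := by
  let F : ℕ → ℝ := fun a => (a + 1) * (16 / 25 : ℝ) ^ a
  have hF : ∀ a, 0 ≤ F a := fun a => by positivity
  have hterm : ∀ a ∈ range n,
      n * blockTerm n (1 - 2 * Real.log n / n) a ≤ F a + F (n - 1 - a) := by
    intro a ha
    rw [mem_range] at ha
    rcases le_or_gt (2 * a + 1) n with h | h
    · linarith [mul_blockTerm_le_geometric hn h, hF (n - 1 - a)]
    · rw [← blockTerm_reflect _ ha]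
      linarith [mul_blockTerm_le_geometric hn (by omega : 2 * (n - 1 - a) + 1 ≤ n), hF a]
  have hlog : 4 ≤ Real.log n := four_le_log (by exact_mod_cast hn)
  rw [le_div_iff₀' (by positivity), blockSum, mul_sum]
  calc ∑ a ∈ range n, n * blockTerm n (1 - 2 * Real.log n / n) a
      ≤ ∑ a ∈ range n, (F a + F (n - 1 - a)) := sum_le_sum hterm
    _ = 2 * ∑ a ∈ range n, F a := by rw [sum_add_distrib, sum_range_reflect, two_mul]
    _ ≤ 2 * (1 / (1 - 16 / 25) ^ 2) := by
        gcongr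
        exact sum_succ_mul_geometric_le (by norm_num) (by norm_num) n
    _ ≤ Real.log n ^ 2 := by nlinarith

lemma blockSum_le {n : ℕ} (hn : 3 ≤ n) :
    blockSum n (1 - 2 * Real.log n / n) ≤ Real.log n ^ 2 / n :=
  (lt_or_ge n 81).elim (blockSum_le_of_lt hn) blockSum_le_of_ge

end BlockSumBound

section UniformOn

variable {α : Type*} [MeasurableSpace α] [MeasurableSingletonClass α]

lemma uniformOn_coe_finset_apply (S : Finset α) (t : Set α) [DecidablePred (· ∈ t)] :
    uniformOn (S : Set α) t = #{x ∈ S | x ∈ t} / #S := by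
  classical
  have hfilter : (S : Set α) ∩ t = ({x ∈ S | x ∈ t} : Finset α) := by
    ext x
    simp
  rw [← uniformOn_inter_self S.finite_toSet, hfilter, uniformOn_apply_finset,
    inter_eq_right.2 (filter_subset _ _)]

lemma uniformOn_coe_finset_eq_smul_sum_dirac (S : Finset α) :
    uniformOn (S : Set α) = (#S : ℝ≥0∞)⁻¹ • ∑ x ∈ S, Measure.dirac x := by
  classical
  ext t _
  simp [uniformOn_coe_finset_apply, ENNReal.div_eq_inv_mul, Set.indicator_apply]

lemma pi_uniformOn_eq_uniformOn_piFinset {ι : Type*} [Fintype ι] [DecidableEq ι]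
    (S : ι → Finset α) :
    (Measure.pi fun i => uniformOn (S i : Set α)) =
      uniformOn (Fintype.piFinset S : Set (ι → α)) := by
  classical
  refine Measure.pi_eq fun t _ => ?_
  have hfilter : {x ∈ Fintype.piFinset S | x ∈ Set.univ.pi t} =
      Fintype.piFinset fun i => {x ∈ S i | x ∈ t i} := by
    ext x
    simp [forall_and]
  simp only [uniformOn_coe_finset_apply, hfilter, Fintype.card_piFinset, Nat.cast_prod]
  exact (ENNReal.prod_div_distrib_of_ne_top fun i _ => ENNReal.natCast_ne_top _).symm

end UniformOn

section SchwartzZippel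

variable {ι R : Type*} [Fintype ι] [CommRing R] [IsDomain R]

lemma card_filter_eval_eq_zero_div_le [DecidableEq ι] [DecidableEq R] {p : MvPolynomial ι R}
    (hp : p ≠ 0) (S : Finset R) :
    #{x ∈ Fintype.piFinset fun _ : ι => S | MvPolynomial.eval x p = 0} /
      (#S ^ Fintype.card ι : ℚ≥0) ≤ p.totalDegree / #S := by
  let e := Fintype.equivFin ι
  have hrename : MvPolynomial.rename e p ≠ 0 :=
    (map_ne_zero_iff _ (MvPolynomial.rename_injective e e.injective)).2 hp
  have hcard : #{x ∈ Fintype.piFinset fun _ : ι => S | MvPolynomial.eval x p = 0} =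
      #{x ∈ Fintype.piFinset fun _ : Fin (Fintype.card ι) => S |
        MvPolynomial.eval x (MvPolynomial.rename e p) = 0} := by
    refine card_equiv (e.arrowCongr (Equiv.refl R)) fun x => ?_
    simp [MvPolynomial.eval_rename, Function.comp_def, e.symm.forall_congr_left]
  rw [hcard]
  refine (MvPolynomial.schwartz_zippel_totalDegree hrename S).trans ?_
  gcongr
  exact MvPolynomial.totalDegree_rename_le e p

lemma pi_uniformOn_eval_eq_zero_le [MeasurableSpace R] [MeasurableSingletonClass R]
    {p : MvPolynomial ι R} (hp : p ≠ 0) {S : Finset R} (hS : S.Nonempty) :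
    (Measure.pi fun _ : ι => uniformOn (S : Set R)) {x | MvPolynomial.eval x p = 0} ≤
      p.totalDegree / #S := by
  classical
  rw [pi_uniformOn_eq_uniformOn_piFinset, uniformOn_coe_finset_apply, Fintype.card_piFinset,
    prod_const, card_univ]
  have hle := (NNRat.cast_le (K := ℝ≥0)).2 (card_filter_eval_eq_zero_div_le hp S)
  have hcard : (#S : ℝ≥0) ≠ 0 := by exact_mod_cast hS.card_ne_zero
  simp only [NNRat.cast_div, NNRat.cast_pow, NNRat.cast_natCast] at hle
  rw [← ENNReal.coe_le_coe, ENNReal.coe_div hcard, ENNReal.coe_div (pow_ne_zero _ hcard)] at hle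
  simpa only [ENNReal.coe_pow, ENNReal.coe_natCast, Nat.cast_pow, Set.mem_ofPred_eq] using hle

end SchwartzZippel

section Hall

variable {ι : Type*} [Fintype ι]

lemma exists_perm_or_exists_zero_block (c : ι × ι → Bool) :
    (∃ σ : Equiv.Perm ι, ∀ i, c (i, σ i) = true) ∨
      ∃ A B : Finset ι, #B = Fintype.card ι + 1 - #A ∧ ∀ ij ∈ A ×ˢ B, c ij = false := by
  classical
  let t : ι → Finset ι := fun i => {j | c (i, j) = true}
  by_cases hall : ∀ A : Finset ι, #A ≤ #(A.biUnion t)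
  · obtain ⟨f, hf, hft⟩ := (all_card_le_biUnion_card_iff_exists_injective t).1 hall
    exact .inl ⟨.ofBijective f hf.bijective_of_finite, fun i => by simpa [t] using hft i⟩
  · push Not at hall
    obtain ⟨A, hA⟩ := hall
    have hcompl : Fintype.card ι + 1 - #A ≤ #(A.biUnion t)ᶜ := by
      rw [card_compl]
      omega
    obtain ⟨B, hBt, hB⟩ := exists_subset_card_eq hcompl
    refine .inr ⟨A, B, hB, fun ⟨i, j⟩ hij => ?_⟩
    have hj := hBt (mem_product.1 hij).2
    simp only [mem_compl, mem_biUnion, not_exists, not_and] at hj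
    simpa [t] using hj i (mem_product.1 hij).1

lemma pi_forall_mem_eq {κ α : Type*} [Fintype κ] [MeasurableSpace α] (μ : Measure α)
    [IsProbabilityMeasure μ] (T : Finset κ) {s : Set α} (hs : MeasurableSet s) :
    (Measure.pi fun _ : κ => μ) {x | ∀ k ∈ T, x k ∈ s} = μ s ^ #T := by
  rw [← Measure.infinitePi_eq_pi]
  exact (Measure.infinitePi_pi _ fun _ _ => hs).trans (by simp)

lemma sum_powerset_pow_eq_blockSum {R : Type*} [CommSemiring R] (q : R) :
    ∑ A : Finset ι, ∑ B ∈ powersetCard (Fintype.card ι + 1 - #A) (univ : Finset ι),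
      q ^ (#A * #B) = blockSum (Fintype.card ι) q := by
  set n := Fintype.card ι with hn
  have hinner (A : Finset ι) : ∑ B ∈ powersetCard (n + 1 - #A) (univ : Finset ι), q ^ (#A * #B) =
      n.choose (n + 1 - #A) * q ^ (#A * (n + 1 - #A)) := by
    rw [sum_congr rfl fun B hB => by rw [(mem_powersetCard.1 hB).2], sum_const, card_powersetCard,
      card_univ, nsmul_eq_mul]
  simp only [hinner]
  rw [← powerset_univ, sum_powerset_apply_card fun m => (n.choose (n + 1 - m) : R) *
    q ^ (m * (n + 1 - m)), card_univ, ← hn, sum_range_succ']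
  simp only [blockSum, blockTerm, Nat.reduceSubDiff, nsmul_eq_mul, Nat.choose_zero_right, tsub_zero,
    Nat.choose_succ_self, Nat.cast_zero, zero_mul, mul_zero, pow_zero, mul_one, add_zero]
  refine sum_congr rfl fun a ha => ?_
  rw [Nat.choose_symm (mem_range.1 ha).le, mul_assoc]

lemma pi_bernoulli_no_perm_le (p : unitInterval) :
    (Measure.pi fun _ : ι × ι => Ber(true, false, p))
        {c | ∃ σ : Equiv.Perm ι, ∀ i, c (i, σ i) = true}ᶜ ≤
      blockSum (Fintype.card ι) (unitInterval.toNNReal (unitInterval.symm p) : ℝ≥0∞) := by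
  classical
  have hcover : {c : ι × ι → Bool | ∃ σ : Equiv.Perm ι, ∀ i, c (i, σ i) = true}ᶜ ⊆
      ⋃ A ∈ (univ : Finset (Finset ι)),
        ⋃ B ∈ powersetCard (Fintype.card ι + 1 - #A) (univ : Finset ι),
          {c | ∀ ij ∈ A ×ˢ B, c ij ∈ ({false} : Set Bool)} := by
    intro c hc
    obtain ⟨A, B, hB, hAB⟩ := (exists_perm_or_exists_zero_block c).resolve_left hc
    simp only [Set.mem_iUnion]
    exact ⟨A, mem_univ A, B, by simp [mem_powersetCard, hB], hAB⟩
  rw [← sum_powerset_pow_eq_blockSum]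
  refine (measure_mono hcover).trans <| (measure_biUnion_finset_le _ _).trans <|
    sum_le_sum fun A _ => (measure_biUnion_finset_le _ _).trans <| sum_le_sum fun B _ => ?_
  rw [pi_forall_mem_eq _ _ (measurableSet_singleton false), card_product]
  simp

end Hall

section Masked

variable {ι R : Type*}

/-- The matrix with support pattern `c` and entries `x`: in the p-Bernoulli code, `c` holds the
coins and `x` the draws from `S`. -/
def maskedMatrix [Zero R] (c : ι × ι → Bool) (x : ι × ι → R) : Matrix ι ι R :=
  Matrix.of fun i j => if c (i, j) = true then x (i, j) else 0

variable [Fintype ι] [DecidableEq ι] [CommRing R]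

/-- The determinant of the matrix with support pattern `c` as a polynomial in its entries, to which
the Schwartz–Zippel lemma is applied. -/
noncomputable def maskedDet (R : Type*) [CommRing R] (c : ι × ι → Bool) : MvPolynomial (ι × ι) R :=
  (maskedMatrix c MvPolynomial.X).det

lemma eval_maskedDet (c : ι × ι → Bool) (x : ι × ι → R) :
    MvPolynomial.eval x (maskedDet R c) = (maskedMatrix c x).det := by
  rw [maskedDet, RingHom.map_det]
  congr 1
  ext i j
  simp only [maskedMatrix, Matrix.map_apply, Matrix.of_apply, RingHom.mapMatrix_apply]
  split_ifs <;> simp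

lemma maskedDet_ne_zero [Nontrivial R] {c : ι × ι → Bool} {σ : Equiv.Perm ι}
    (hσ : ∀ i, c (i, σ i) = true) : maskedDet R c ≠ 0 := by
  intro hzero
  have hperm : maskedMatrix c (fun ij => if σ ij.1 = ij.2 then (1 : R) else 0) =
      σ.permMatrix R := by
    ext i j
    by_cases hj : σ i = j
    · subst hj; simp [maskedMatrix, PEquiv.toMatrix_apply, hσ i]
    · simp [maskedMatrix, PEquiv.toMatrix_apply, hj]
  have hdet := eval_maskedDet (R := R) c fun ij => if σ ij.1 = ij.2 then 1 else 0
  rw [hzero, map_zero, hperm, Matrix.det_permutation] at hdet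
  rcases Int.units_eq_one_or (Equiv.Perm.sign σ) with h | h <;> simp [h] at hdet

lemma totalDegree_det_le {κ : Type*} {M : Matrix ι ι (MvPolynomial κ R)} {d : ℕ}
    (hM : ∀ i j, (M i j).totalDegree ≤ d) : M.det.totalDegree ≤ Fintype.card ι * d := by
  rw [Matrix.det_apply]
  refine MvPolynomial.totalDegree_finsetSum_le fun σ _ => ?_
  calc (Equiv.Perm.sign σ • ∏ i, M (σ i) i).totalDegree
      ≤ (∏ i, M (σ i) i).totalDegree := MvPolynomial.totalDegree_smul_le _ _
    _ ≤ ∑ i, (M (σ i) i).totalDegree := MvPolynomial.totalDegree_finsetProd _ _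
    _ ≤ Fintype.card ι * d := sum_le_card_nsmul _ _ d fun i _ => hM _ _

lemma totalDegree_maskedDet_le [Nontrivial R] (c : ι × ι → Bool) :
    (maskedDet R c).totalDegree ≤ Fintype.card ι := by
  refine (totalDegree_det_le (d := 1) fun i j => ?_).trans_eq (mul_one _)
  rw [maskedMatrix, Matrix.of_apply]
  split_ifs <;> simp

end Masked

lemma mul_le_prod_of_le_section {α β : Type*} [MeasurableSpace α] [MeasurableSpace β]
    (μ : Measure α) (ν : Measure β) [SFinite ν] {E : Set α} {D : Set (α × β)} {r : ℝ≥0∞}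
    (h : ∀ x ∈ E, r ≤ ν (Prod.mk x ⁻¹' D)) : r * μ E ≤ μ.prod ν D := by
  set D' := toMeasurable (μ.prod ν) D
  have hD' : MeasurableSet D' := measurableSet_toMeasurable _ _
  calc r * μ E ≤ r * μ {x | r ≤ ν (Prod.mk x ⁻¹' D')} := by
        gcongr
        exact fun x hx =>
          (h x hx).trans (measure_mono (Set.preimage_mono (subset_toMeasurable _ D)))
    _ ≤ ∫⁻ x, ν (Prod.mk x ⁻¹' D') ∂μ :=
        mul_meas_ge_le_lintegral (measurable_measure_prodMk_left hD') r
    _ = μ.prod ν D := by rw [← Measure.prod_apply hD', measure_toMeasurable]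

section Random

variable {ι K : Type*} [Fintype ι] [DecidableEq ι] [CommRing K] [IsDomain K] [MeasurableSpace K]
  [MeasurableSingletonClass K]

lemma le_pi_uniformOn_det_maskedMatrix_ne_zero {S : Finset K} (hS : S.Nonempty)
    {c : ι × ι → Bool} {σ : Equiv.Perm ι} (hσ : ∀ i, c (i, σ i) = true) :
    1 - (Fintype.card ι / #S : ℝ≥0∞) ≤
      (Measure.pi fun _ : ι × ι => uniformOn (S : Set K)) {x | (maskedMatrix c x).det ≠ 0} := by
  have := isProbabilityMeasure_uniformOn S.finite_toSet hS
  set ν := Measure.pi fun _ : ι × ι => uniformOn (S : Set K)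
  have hcompl : {x : ι × ι → K | (maskedMatrix c x).det ≠ 0}ᶜ =
      {x | MvPolynomial.eval x (maskedDet K c) = 0} := by
    ext x
    simp [eval_maskedDet]
  rw [tsub_le_iff_right, ← measure_univ (μ := ν)]
  refine (measure_univ_le_add_compl {x | (maskedMatrix c x).det ≠ 0}).trans ?_
  gcongr
  calc ν {x | (maskedMatrix c x).det ≠ 0}ᶜ ≤ (maskedDet K c).totalDegree / #S := by
        rw [hcompl]
        exact pi_uniformOn_eval_eq_zero_le (maskedDet_ne_zero hσ) hS
    _ ≤ Fintype.card ι / #S := by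
        gcongr
        exact totalDegree_maskedDet_le c

lemma le_measure_det_maskedMatrix_ne_zero (p : unitInterval) {S : Finset K} (hS : S.Nonempty) :
    (1 - Fintype.card ι / #S) *
        (1 - blockSum (Fintype.card ι) (unitInterval.toNNReal (unitInterval.symm p) : ℝ≥0∞)) ≤
      (Measure.pi fun _ : ι × ι => Ber(true, false, p).prod (uniformOn (S : Set K)))
        {ω | (maskedMatrix (fun ij => (ω ij).1) fun ij => (ω ij).2).det ≠ 0} := by
  have := isProbabilityMeasure_uniformOn S.finite_toSet hS
  set E : Set (ι × ι → Bool) := {c | ∃ σ : Equiv.Perm ι, ∀ i, c (i, σ i) = true}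
  set D : Set ((ι × ι → Bool) × (ι × ι → K)) := {z | (maskedMatrix z.1 z.2).det ≠ 0}
  set μ := Measure.pi fun _ : ι × ι => Ber(true, false, p)
  set ν := Measure.pi fun _ : ι × ι => uniformOn (S : Set K)
  set q := (unitInterval.toNNReal (unitInterval.symm p) : ℝ≥0∞)
  have hE : 1 - blockSum (Fintype.card ι) q ≤ μ E := by
    rw [tsub_le_iff_right, ← measure_univ (μ := μ)]
    exact (measure_univ_le_add_compl E).trans (by gcongr; exact pi_bernoulli_no_perm_le p)
  have hsection : ∀ c ∈ E, 1 - (Fintype.card ι / #S : ℝ≥0∞) ≤ ν (Prod.mk c ⁻¹' D) :=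
    fun c ⟨_, hσ⟩ => le_pi_uniformOn_det_maskedMatrix_ne_zero hS hσ
  have hsplit := measurePreserving_arrowProdEquivProdArrow Bool K (ι × ι)
    (fun _ => Ber(true, false, p)) fun _ => uniformOn (S : Set K)
  calc _ ≤ (1 - Fintype.card ι / #S : ℝ≥0∞) * μ E := by gcongr
    _ ≤ μ.prod ν D := mul_le_prod_of_le_section μ ν hsection
    _ = _ := (hsplit.measure_preimage_equiv D).symm

end Random

lemma bernoulliMeasure_mk_eq {X : Type*} [MeasurableSpace X] (x y : X) {p : ℝ}
    (hp : p ∈ unitInterval) :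
    Ber(x, y, ⟨p, hp⟩) =
      ENNReal.ofReal p • Measure.dirac x + ENNReal.ofReal (1 - p) • Measure.dirac y := by
  rw [bernoulliMeasure_def, ENNReal.ofReal_eq_coe_nnreal hp.1,
    ENNReal.ofReal_eq_coe_nnreal (sub_nonneg.2 hp.2)]
  rfl

theorem stmt_7_general {K : Type*} [Field K] [MeasurableSpace K] [MeasurableSingletonClass K]
    (n : ℕ) (hn : 3 ≤ n) (S : Finset K) (hS : S.Nonempty) :
    (let p : ℝ := 2 * Real.log n / n
    let μb : Measure Bool :=
      ENNReal.ofReal p • Measure.dirac true + ENNReal.ofReal (1 - p) • Measure.dirac false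
    let μS : Measure K := (S.card : ENNReal)⁻¹ • ∑ x ∈ S, Measure.dirac x
    let μ : Measure (Fin n × Fin n → Bool × K) := Measure.pi fun _ => μb.prod μS
    ENNReal.ofReal ((1 - (n : ℝ) / S.card) * (1 - Real.log n ^ 2 / n)) ≤
      μ {ω | IsUnit (Matrix.of fun i j : Fin n =>
        if (ω (i, j)).1 = true then (ω (i, j)).2 else 0).det}) := by
  intro p μb μS μ
  have hp : p ∈ unitInterval := two_mul_log_div_self_mem_unitInterval n
  have hlog : Real.log n ^ 2 / n ≤ 1 :=
    sq_log_div_self_le_one (by exact_mod_cast (by omega : 1 ≤ n))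
  have hblock : blockSum n (1 - p) ≤ Real.log n ^ 2 / n := blockSum_le hn
  have hcoe : ENNReal.ofReal (blockSum n (1 - p)) =
      blockSum n (unitInterval.toNNReal (unitInterval.symm ⟨p, hp⟩) : ℝ≥0∞) :=
    ofReal_blockSum_coe n (unitInterval.toNNReal (unitInterval.symm ⟨p, hp⟩))
  have hdet := le_measure_det_maskedMatrix_ne_zero (ι := Fin n) ⟨p, hp⟩ hS
  rw [bernoulliMeasure_mk_eq, uniformOn_coe_finset_eq_smul_sum_dirac, Fintype.card_fin,
    ← hcoe] at hdet
  simp only [isUnit_iff_ne_zero]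
  refine le_trans ?_ hdet
  rw [ENNReal.ofReal_mul' (sub_nonneg.2 hlog), ENNReal.ofReal_sub _ (by positivity),
    ENNReal.ofReal_sub _ (by positivity), ENNReal.ofReal_div_of_pos (by exact_mod_cast hS.card_pos),
    ENNReal.ofReal_one, ENNReal.ofReal_natCast, ENNReal.ofReal_natCast]
  gcongr

/-- the p-Bernoulli code with p = 2 ln(n)/n, n ≥ 12.  Each of the n² entries
independently equals a uniformly random element of the finite nonempty set S ⊆ ℝ with
probability p and 0 otherwise (modeled by a coin in `Bool` paired with a uniform draw from
S).  The probability that the resulting n×n matrix is invertible is at least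
(1 − n²/|S|)·(1 − (ln n)²/n). -/
theorem stmt_7 (n : ℕ) (hn : 12 ≤ n) (S : Finset ℝ) (hS : S.Nonempty) :
    (let p : ℝ := 2 * Real.log n / n
    let μb : Measure Bool :=
      ENNReal.ofReal p • Measure.dirac true + ENNReal.ofReal (1 - p) • Measure.dirac false
    let μS : Measure ℝ := (S.card : ENNReal)⁻¹ • ∑ x ∈ S, Measure.dirac x
    let μ : Measure (Fin n × Fin n → Bool × ℝ) := Measure.pi fun _ => μb.prod μS
    ENNReal.ofReal ((1 - (n : ℝ) ^ 2 / S.card) * (1 - Real.log n ^ 2 / n)) ≤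
      μ {ω | IsUnit (Matrix.of fun i j : Fin n =>
        if (ω (i, j)).1 = true then (ω (i, j)).2 else 0).det}) := by
  have hn₁ : (1 : ℝ) ≤ n := by exact_mod_cast (by omega : 1 ≤ n)
  have hlog : 0 ≤ 1 - Real.log n ^ 2 / n := sub_nonneg.2 (sq_log_div_self_le_one hn₁)
  refine (ENNReal.ofReal_le_ofReal ?_).trans (stmt_7_general n (by omega) S hS)
  gcongr
  exact le_self_pow₀ hn₁ two_ne_zero
end

section
/- Let n ≥ 12 and p = 2 ln(n)/n. Consider the random bipartite graph on two vertex sets X and Y of size n in which each of the n² possible edges is present independently with probability p. Then the probability that this graph contains a perfect matching (a bijection σ : X → Y with every pair (x, σ(x)) an edge) is at least 1 − (ln n)²/n. -/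
open MeasureTheory

/-!
By Hall's theorem, a bipartite graph with `n + n` vertices and no perfect matching has an empty
`a × b` block with `a + b = n + 1`, so the failure probability is at most
`∑ j < n, C(n, j + 1) C(n, n - j) (1 - p) ^ ((j + 1) (n - j))`. The terms are symmetric under
`j ↔ n - 1 - j`. For `2 j ≤ n`, the second-order bound `1 - p ≤ exp (-(p + p² / 2))` and
`n² = exp (p n)` bound the `j`-th term by `exp (p (j² - 1)) / (n j! (j + 1)!)`: the quadratic part
of the exponent gains the `-1`. Once `n ≥ 20` this is at most `(3 / 4) ^ j / n`, and the two
geometric series contribute `8 / n ≤ (log n)² / n`. For `12 ≤ n < 20` the sum is evaluated with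
`log n` replaced by a rational lower bound.
-/

namespace RandomBipartite

open Finset Real ProbabilityTheory
open scoped Nat

section UnionBound

variable {α β : Type*} [Fintype α] [Fintype β]

/-- The expected number of empty blocks with `j + 1` rows and `n - j` columns in a random `n × n`
array whose cells are empty independently with probability `q`. As `j` runs over `range n`, these
are all the block shapes `a × b` with `a + b = n + 1` and `1 ≤ a, b`. -/
noncomputable def expectedEmptyBlocks (n : ℕ) (q : ℝ) (j : ℕ) : ℝ :=
  n.choose (j + 1) * n.choose (n - j) * q ^ ((j + 1) * (n - j))

theorem exists_equiv_or_exists_empty_block (hcard : Fintype.card α = Fintype.card β)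
    (r : α → β → Prop) :
    (∃ σ : α ≃ β, ∀ x, r x (σ x)) ∨ ∃ (A : Finset α) (B : Finset β),
      #A + #B = Fintype.card α + 1 ∧ ∀ x ∈ A, ∀ y ∈ B, ¬ r x y := by
  classical
  by_cases hall : ∀ A : Finset α, #A ≤ #{y | ∃ x ∈ A, r x y}
  · obtain ⟨f, f_inj, hf⟩ := (Fintype.all_card_le_filter_rel_iff_exists_injective r).1 hall
    have f_bij : f.Bijective := (Fintype.bijective_iff_injective_and_card f).2 ⟨f_inj, hcard⟩
    exact .inl ⟨.ofBijective f f_bij, hf⟩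
  · push Not at hall
    obtain ⟨A, hA⟩ := hall
    have hA_le : #A ≤ Fintype.card α := card_le_univ A
    obtain ⟨B, hB, hB_card⟩ : ∃ B ⊆ ({y | ∃ x ∈ A, r x y} : Finset β)ᶜ,
        #B = Fintype.card α + 1 - #A :=
      exists_subset_card_eq (by rw [card_compl]; omega)
    refine .inr ⟨A, B, by omega, fun x hx y hy hxy => ?_⟩
    exact mem_compl.1 (hB hy) (mem_filter.2 ⟨mem_univ y, x, hx, hxy⟩)

theorem pi_real_forall_mem_eq {ι Ω : Type*} [Fintype ι] [MeasurableSpace Ω] (ν : Measure Ω)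
    [IsProbabilityMeasure ν] (s : Finset ι) (t : Set Ω) :
    (Measure.pi fun _ : ι => ν).real {ω | ∀ i ∈ s, ω i ∈ t} = ν.real t ^ #s := by
  change (Measure.pi fun _ : ι => ν).real ((s : Set ι).pi fun _ => t) = _
  simp only [measureReal_def, Measure.pi_pi_finset, prod_const, ENNReal.toReal_pow]

theorem sum_pi_real_block_eq {Ω : Type*} [MeasurableSpace Ω] (ν : Measure Ω)
    [IsProbabilityMeasure ν] (a b : ℕ) (t : Set Ω) :
    ∑ C ∈ powersetCard a (univ : Finset α) ×ˢ powersetCard b (univ : Finset β),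
        (Measure.pi fun _ : α × β => ν).real {ω | ∀ e ∈ C.1 ×ˢ C.2, ω e ∈ t} =
      (Fintype.card α).choose a * (Fintype.card β).choose b * ν.real t ^ (a * b) := by
  have block_eq : ∀ C ∈ powersetCard a (univ : Finset α) ×ˢ powersetCard b (univ : Finset β),
      (Measure.pi fun _ : α × β => ν).real {ω | ∀ e ∈ C.1 ×ˢ C.2, ω e ∈ t} =
        ν.real t ^ (a * b) := by
    intro C hC
    obtain ⟨hA, hB⟩ := mem_product.1 hC
    rw [pi_real_forall_mem_eq, card_product, (mem_powersetCard.1 hA).2, (mem_powersetCard.1 hB).2]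
  rw [sum_congr rfl block_eq, sum_const, card_product, card_powersetCard, card_powersetCard,
    card_univ, card_univ, nsmul_eq_mul, Nat.cast_mul]

theorem pi_real_compl_exists_equiv_le (ν : Measure Bool) [IsProbabilityMeasure ν]
    (hcard : Fintype.card α = Fintype.card β) :
    (Measure.pi fun _ : α × β => ν).real {ω | ∃ σ : α ≃ β, ∀ x, ω (x, σ x) = true}ᶜ ≤
      ∑ j ∈ range (Fintype.card α), expectedEmptyBlocks (Fintype.card α) (ν.real {false}) j := by
  set n := Fintype.card α with hn
  let blocks (j : ℕ) : Finset (Finset α × Finset β) :=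
    powersetCard (j + 1) univ ×ˢ powersetCard (n - j) univ
  let emptyBlock (C : Finset α × Finset β) : Set (α × β → Bool) :=
    {ω | ∀ e ∈ C.1 ×ˢ C.2, ω e ∈ ({false} : Set Bool)}
  have cover : {ω | ∃ σ : α ≃ β, ∀ x, ω (x, σ x) = true}ᶜ ⊆
      ⋃ j ∈ range n, ⋃ C ∈ blocks j, emptyBlock C := by
    intro ω hω
    obtain ⟨A, B, hAB, hempty⟩ :=
      (exists_equiv_or_exists_empty_block hcard fun x y => ω (x, y) = true).resolve_left hω
    have hA : #A ≤ n := card_le_univ A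
    have hB : #B ≤ n := (card_le_univ B).trans_eq hcard.symm
    have hA_mem : A ∈ powersetCard (#A - 1 + 1) univ :=
      mem_powersetCard.2 ⟨subset_univ A, by omega⟩
    have hB_mem : B ∈ powersetCard (n - (#A - 1)) univ :=
      mem_powersetCard.2 ⟨subset_univ B, by omega⟩
    simp only [Set.mem_iUnion]
    refine ⟨#A - 1, mem_range.2 (by omega), (A, B), mem_product.2 ⟨hA_mem, hB_mem⟩, ?_⟩
    intro e he
    exact Bool.eq_false_of_not_eq_true
      (hempty e.1 (mem_product.1 he).1 e.2 (mem_product.1 he).2)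
  calc _ ≤ (Measure.pi fun _ : α × β => ν).real (⋃ j ∈ range n, ⋃ C ∈ blocks j, emptyBlock C) :=
        measureReal_mono cover (measure_ne_top _ _)
    _ ≤ ∑ j ∈ range n, ∑ C ∈ blocks j, (Measure.pi fun _ : α × β => ν).real (emptyBlock C) :=
        (measureReal_biUnion_finset_le _ _).trans
          (sum_le_sum fun j _ => measureReal_biUnion_finset_le _ _)
    _ = _ := sum_congr rfl fun j _ => by
        rw [sum_pi_real_block_eq, ← hcard, ← hn, expectedEmptyBlocks]

theorem ofReal_one_sub_le_pi_exists_equiv (p : unitInterval)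
    (hcard : Fintype.card α = Fintype.card β)
    {c : ℝ} (hc : ∑ j ∈ range (Fintype.card α),
      expectedEmptyBlocks (Fintype.card α) (1 - (p : ℝ)) j ≤ c) :
    ENNReal.ofReal (1 - c) ≤ (Measure.pi fun _ : α × β => bernoulliMeasure true false p)
      {ω | ∃ σ : α ≃ β, ∀ x, ω (x, σ x) = true} := by
  have hfalse : (bernoulliMeasure true false p).real {false} = 1 - (p : ℝ) := by
    simp
  have hfail := pi_real_compl_exists_equiv_le (bernoulliMeasure true false p) hcard
  rw [hfalse, probReal_compl_eq_one_sub (Set.toFinite _).measurableSet] at hfail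
  rw [← ofReal_measureReal]
  exact ENNReal.ofReal_le_ofReal (by linarith)

theorem ofReal_smul_dirac_add_eq_bernoulliMeasure {Ω : Type*} [MeasurableSpace Ω] (x y : Ω)
    (p : unitInterval) :
    ENNReal.ofReal p • Measure.dirac x + ENNReal.ofReal (1 - p) • Measure.dirac y =
      bernoulliMeasure x y p := by
  have hp : ENNReal.ofReal p = unitInterval.toNNReal p :=
    ENNReal.ofReal_eq_coe_nnreal (unitInterval.nonneg p)
  have hp' : ENNReal.ofReal (1 - p) = unitInterval.toNNReal (unitInterval.symm p) :=
    ENNReal.ofReal_eq_coe_nnreal (unitInterval.one_minus_nonneg p)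
  rw [bernoulliMeasure_def, hp, hp', ENNReal.smul_def, ENNReal.smul_def]

end UnionBound

section TermBounds

theorem expectedEmptyBlocks_mono (n j : ℕ) {q q' : ℝ} (hq : 0 ≤ q) (hqq' : q ≤ q') :
    expectedEmptyBlocks n q j ≤ expectedEmptyBlocks n q' j := by
  unfold expectedEmptyBlocks
  gcongr

theorem expectedEmptyBlocks_reflect {n j : ℕ} (hj : j < n) (q : ℝ) :
    expectedEmptyBlocks n q (n - 1 - j) = expectedEmptyBlocks n q j := by
  rw [expectedEmptyBlocks, expectedEmptyBlocks, show n - 1 - j + 1 = n - j by omega,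
    show n - (n - 1 - j) = j + 1 by omega, mul_comm (n - j) (j + 1), mul_comm (n.choose _ : ℝ)]

theorem expectedEmptyBlocks_le_pow_div {n j : ℕ} (hj : j ≤ n) {q : ℝ} (hq : 0 ≤ q) :
    expectedEmptyBlocks n q j ≤
      (n : ℝ) ^ (2 * j + 1) * q ^ ((j + 1) * (n - j)) / (j ! * (j + 1)!) := by
  rw [expectedEmptyBlocks, Nat.choose_symm hj]
  calc _ ≤ (n : ℝ) ^ (j + 1) / (j + 1)! * (n ^ j / j !) * q ^ ((j + 1) * (n - j)) := by
        gcongr <;> exact Nat.choose_le_pow_div _ _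
    _ = _ := by ring

theorem one_sub_le_exp_neg_add_sq_div_two {x : ℝ} (hx : 0 ≤ x) :
    1 - x ≤ exp (-(x + x ^ 2 / 2)) := by
  rcases lt_or_ge x 1 with hx1 | hx1
  · have hsum := hasSum_pow_div_log_of_abs_lt_one (abs_lt.2 ⟨by linarith, hx1⟩)
    have hpartial := sum_le_hasSum (range 2) (fun i _ => by positivity) hsum
    norm_num [sum_range_succ] at hpartial
    rw [← log_le_iff_le_exp (by linarith)]
    linarith
  · exact (sub_nonpos.2 hx1).trans (exp_pos _).le

theorem expectedEmptyBlocks_le_exp_div {n j : ℕ} (hlog : 2 ≤ log n)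
    (hp : 2 * log n / n ≤ 1) (hj : 2 * j ≤ n) :
    expectedEmptyBlocks n (1 - 2 * log n / n) j ≤
      exp (2 * log n / n * (j ^ 2 - 1)) / (j ! * (j + 1)!) / n := by
  have hn : (0 : ℝ) < n := by
    rcases n.eq_zero_or_pos with rfl | hn
    · norm_num at hlog
    · exact_mod_cast hn
  set p := 2 * log n / n
  have hpn : p * n = 2 * log n := div_mul_cancel₀ _ hn.ne'
  have hp0 : 0 ≤ p := by positivity
  have hjn : 2 * (j : ℝ) ≤ n := by exact_mod_cast hj
  have hexponent : (2 * j + 2) * log n + (j + 1) * (n - j) * -(p + p ^ 2 / 2) ≤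
      p * (j ^ 2 - 1) := by
    -- `n - j ≥ n / 2`, so the quadratic term gains `p * log n / 2 ≥ p` per row.
    have hgain : p ≤ p ^ 2 / 2 * (n - j) := by nlinarith
    nlinarith
  have hpow : (n : ℝ) ^ (2 * j + 2) * (1 - p) ^ ((j + 1) * (n - j)) ≤
      exp (p * (j ^ 2 - 1)) := by
    calc _ ≤ exp (log n) ^ (2 * j + 2) * exp (-(p + p ^ 2 / 2)) ^ ((j + 1) * (n - j)) := by
          rw [exp_log hn]
          exact mul_le_mul_of_nonneg_left (pow_le_pow_left₀ (sub_nonneg.2 hp)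
            (one_sub_le_exp_neg_add_sq_div_two hp0) _) (by positivity)
      _ = exp ((2 * j + 2) * log n + (j + 1) * (n - j) * -(p + p ^ 2 / 2)) := by
          rw [← exp_nat_mul, ← exp_nat_mul, ← exp_add]
          push_cast [Nat.cast_sub (show j ≤ n by omega)]
          rfl
      _ ≤ _ := exp_le_exp.2 hexponent
  calc _ ≤ (n : ℝ) ^ (2 * j + 1) * (1 - p) ^ ((j + 1) * (n - j)) / (j ! * (j + 1)!) :=
        expectedEmptyBlocks_le_pow_div (by omega) (by linarith)
    _ = (n : ℝ) ^ (2 * j + 2) * (1 - p) ^ ((j + 1) * (n - j)) / (j ! * (j + 1)!) / n := by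
        field_simp
        ring
    _ ≤ _ := by gcongr

end TermBounds

section Logarithm

theorem two_mul_log_le_self {x : ℝ} (hx : 0 < x) : 2 * log x ≤ x := by
  have hhalf := log_le_sub_one_of_pos (half_pos hx)
  rw [log_div hx.ne' two_ne_zero] at hhalf
  linarith [log_two_lt_d9]

theorem exp_two_mul_log_div_pow_le_sq {k n : ℕ} (hk : 3 ≤ k) (hkn : k ≤ n) :
    exp (2 * log n / n) ^ k ≤ (k : ℝ) ^ 2 := by
  have hk' : (3 : ℝ) ≤ k := by exact_mod_cast hk
  have hkn' : (k : ℝ) ≤ n := by exact_mod_cast hkn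
  have hexp := exp_one_lt_three
  have hanti : log n / n ≤ log k / k :=
    log_div_self_antitoneOn (Set.mem_Ici.2 (by linarith)) (Set.mem_Ici.2 (by linarith)) hkn'
  calc _ = exp (k * (2 * (log n / n))) := by rw [← exp_nat_mul, mul_div_assoc]
    _ ≤ exp (k * (2 * (log k / k))) := by gcongr
    _ = exp (log k) ^ 2 := by rw [← exp_nat_mul]; congr 1; field_simp; norm_num [mul_comm]
    _ = _ := by rw [exp_log (by linarith)]

theorem twelve_fifths_le_log_twelve : 12 / 5 ≤ log 12 := by
  rw [show (12 : ℝ) = 2 ^ 2 * 3 by norm_num, log_mul (by norm_num) (by norm_num), log_pow]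
  push_cast
  linarith [log_two_gt_d9, log_three_gt_d9]

theorem eleven_fourths_le_log_sixteen : 11 / 4 ≤ log 16 := by
  rw [show (16 : ℝ) = 2 ^ 4 by norm_num, log_pow]
  push_cast
  linarith [log_two_gt_d9]

theorem twenty_nine_tenths_le_log_twenty : 29 / 10 ≤ log 20 := by
  rw [show (20 : ℝ) = 2 ^ 2 * 5 by norm_num, log_mul (by norm_num) (by norm_num), log_pow]
  push_cast
  linarith [log_two_gt_d9, log_five_gt_d9]

end Logarithm

section GeometricDecay

theorem two_mul_pow_self_le {j : ℕ} (hj : 11 ≤ j) :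
    (2 * j : ℝ) ^ j ≤ (3 / 4) ^ j * (j ! * (j + 1)!) := by
  induction j, hj using Nat.le_induction with
  | base => norm_num [Nat.factorial]
  | succ j hj ih =>
    have hj' : (11 : ℝ) ≤ j := by exact_mod_cast hj
    have hcompound : (1 + (j : ℝ)⁻¹) ^ j ≤ 3 := one_add_inv_pow_le_exp.trans exp_one_lt_three.le
    have hsplit : 2 * ((j : ℝ) + 1) = 2 * j * (1 + (j : ℝ)⁻¹) := by field_simp
    calc (2 * ((j + 1 : ℕ) : ℝ)) ^ (j + 1)
        = (2 * j) ^ j * (1 + (j : ℝ)⁻¹) ^ j * (2 * (j + 1)) := by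
          rw [pow_succ]; push_cast; rw [← mul_pow, ← hsplit]
      _ ≤ (3 / 4) ^ j * (j ! * (j + 1)!) * 3 * (2 * (j + 1)) := by gcongr
      _ ≤ (3 / 4) ^ j * (j ! * (j + 1)!) * (3 / 4 * (j + 2)) * (j + 1) := by
          rw [mul_assoc _ (3 : ℝ), mul_assoc _ (3 / 4 * _)]
          gcongr _ * ?_
          nlinarith
      _ = _ := by
          rw [Nat.factorial_succ (j + 1), Nat.factorial_succ j]
          push_cast
          ring

theorem exp_mul_sq_sub_one_le {n j : ℕ} (hn : 20 ≤ n) (hj : 2 * j ≤ n) :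
    exp (2 * log n / n * (j ^ 2 - 1)) ≤ (3 / 4) ^ j * (j ! * (j + 1)!) := by
  have hp0 : 0 ≤ 2 * log n / n := by positivity
  rcases j.eq_zero_or_pos with rfl | hj0
  · simpa using hp0
  rcases le_or_gt j 10 with hj10 | hj10
  · have hbase : exp (2 * log n / n) ≤ 27 / 20 :=
      le_of_pow_le_pow_left₀ (n := 20) (by norm_num) (by norm_num)
        ((exp_two_mul_log_div_pow_le_sq (by norm_num) hn).trans (by norm_num))
    calc exp (2 * log n / n * (j ^ 2 - 1)) = exp (2 * log n / n) ^ (j ^ 2 - 1) := by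
          rw [← exp_nat_mul, Nat.cast_sub (Nat.one_le_pow _ _ hj0), mul_comm]
          push_cast
          rfl
      _ ≤ (27 / 20) ^ (j ^ 2 - 1) := by gcongr
      _ ≤ _ := by interval_cases j <;> norm_num [Nat.factorial]
  · have hbase : exp (2 * log n / n) ^ j ≤ 2 * j := by
      have hsq := exp_two_mul_log_div_pow_le_sq (by omega) hj
      rw [mul_comm 2 j, pow_mul] at hsq
      refine le_of_pow_le_pow_left₀ two_ne_zero (by positivity) (hsq.trans_eq ?_)
      push_cast
      ring
    calc exp (2 * log n / n * (j ^ 2 - 1)) ≤ exp (2 * log n / n * j ^ 2) := by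
          gcongr
          linarith
      _ = (exp (2 * log n / n) ^ j) ^ j := by
          rw [← pow_mul, ← exp_nat_mul]
          push_cast
          ring_nf
      _ ≤ (2 * j) ^ j := by gcongr
      _ ≤ _ := two_mul_pow_self_le hj10

theorem expectedEmptyBlocks_le_geometric {n j : ℕ} (hn : 20 ≤ n) (hj : 2 * j ≤ n) :
    expectedEmptyBlocks n (1 - 2 * log n / n) j ≤ (3 / 4) ^ j / n := by
  have hn' : (20 : ℝ) ≤ n := by exact_mod_cast hn
  have hlog : 2 ≤ log n := by
    linarith [twenty_nine_tenths_le_log_twenty, log_le_log (by norm_num) hn']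
  have hp : 2 * log n / n ≤ 1 := div_le_one_of_le₀ (two_mul_log_le_self (by linarith)) (by simp)
  refine (expectedEmptyBlocks_le_exp_div hlog hp hj).trans ?_
  gcongr
  exact (div_le_iff₀ (by positivity)).2 (exp_mul_sq_sub_one_le hn hj)

end GeometricDecay

section Sums

theorem sum_expectedEmptyBlocks_le_of_twenty_le {n : ℕ} (hn : 20 ≤ n) :
    ∑ j ∈ range n, expectedEmptyBlocks n (1 - 2 * log n / n) j ≤ log n ^ 2 / n := by
  have hn' : (20 : ℝ) ≤ n := by exact_mod_cast hn
  have hlog : 29 / 10 ≤ log n :=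
    twenty_nine_tenths_le_log_twenty.trans (log_le_log (by norm_num) hn')
  have hterm : ∀ j ∈ range n, expectedEmptyBlocks n (1 - 2 * log n / n) j ≤
      (3 / 4) ^ j / n + (3 / 4) ^ (n - 1 - j) / n := by
    intro j hj
    rcases le_or_gt (2 * j) n with hsmall | hlarge
    · exact (expectedEmptyBlocks_le_geometric hn hsmall).trans
        (le_add_of_nonneg_right (by positivity))
    · rw [← expectedEmptyBlocks_reflect (mem_range.1 hj)]
      exact (expectedEmptyBlocks_le_geometric hn (by omega)).trans
        (le_add_of_nonneg_left (by positivity))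
  have hgeom : ∑ j ∈ range n, (3 / 4 : ℝ) ^ j ≤ 4 := by
    rw [geom_sum_eq (by norm_num), div_le_iff_of_neg (by norm_num)]
    linarith [show (0 : ℝ) ≤ (3 / 4) ^ n by positivity]
  calc _ ≤ ∑ j ∈ range n, ((3 / 4 : ℝ) ^ j / n + (3 / 4) ^ (n - 1 - j) / n) := sum_le_sum hterm
    _ = (∑ j ∈ range n, (3 / 4 : ℝ) ^ j + ∑ j ∈ range n, (3 / 4 : ℝ) ^ j) / n := by
        rw [sum_add_distrib, sum_range_reflect fun j => (3 / 4 : ℝ) ^ j / n, ← sum_div, add_div]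
    _ ≤ log n ^ 2 / n := by
        gcongr
        nlinarith

theorem sum_expectedEmptyBlocks_le_of_le_log {n : ℕ} {ℓ : ℝ} (hn : 0 < n) (hℓ : 0 ≤ ℓ)
    (hlog : ℓ ≤ log n)
    (h : ∑ j ∈ range n, expectedEmptyBlocks n (1 - 2 * ℓ / n) j ≤ ℓ ^ 2 / n) :
    ∑ j ∈ range n, expectedEmptyBlocks n (1 - 2 * log n / n) j ≤ log n ^ 2 / n := by
  have hp : 2 * log n / n ≤ 1 :=
    div_le_one_of_le₀ (two_mul_log_le_self (by exact_mod_cast hn)) (by positivity)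
  calc _ ≤ ∑ j ∈ range n, expectedEmptyBlocks n (1 - 2 * ℓ / n) j :=
        sum_le_sum fun j _ => expectedEmptyBlocks_mono n j (by linarith) (by gcongr)
    _ ≤ ℓ ^ 2 / n := h
    _ ≤ _ := by gcongr

theorem sum_expectedEmptyBlocks_le_of_lt_sixteen {n : ℕ} (hn : 12 ≤ n) (hn' : n < 16) :
    ∑ j ∈ range n, expectedEmptyBlocks n (1 - 2 * (12 / 5) / n) j ≤ (12 / 5) ^ 2 / n := by
  interval_cases n <;>
    simp only [sum_range_succ, sum_range_zero, expectedEmptyBlocks] <;>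
    norm_num [Nat.choose]

theorem sum_expectedEmptyBlocks_le_of_lt_twenty {n : ℕ} (hn : 16 ≤ n) (hn' : n < 20) :
    ∑ j ∈ range n, expectedEmptyBlocks n (1 - 2 * (11 / 4) / n) j ≤ (11 / 4) ^ 2 / n := by
  interval_cases n <;>
    simp only [sum_range_succ, sum_range_zero, expectedEmptyBlocks] <;>
    norm_num [Nat.choose]

theorem sum_expectedEmptyBlocks_le {n : ℕ} (hn : 12 ≤ n) :
    ∑ j ∈ range n, expectedEmptyBlocks n (1 - 2 * log n / n) j ≤ log n ^ 2 / n := by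
  rcases lt_or_ge n 16 with h16 | h16
  · have hlog : 12 / 5 ≤ log n := twelve_fifths_le_log_twelve.trans
      (log_le_log (by norm_num) (by exact_mod_cast hn))
    exact sum_expectedEmptyBlocks_le_of_le_log (by omega) (by norm_num) hlog
      (sum_expectedEmptyBlocks_le_of_lt_sixteen hn h16)
  rcases lt_or_ge n 20 with h20 | h20
  · have hlog : 11 / 4 ≤ log n := eleven_fourths_le_log_sixteen.trans
      (log_le_log (by norm_num) (by exact_mod_cast h16))
    exact sum_expectedEmptyBlocks_le_of_le_log (by omega) (by norm_num) hlog
      (sum_expectedEmptyBlocks_le_of_lt_twenty h16 h20)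
  · exact sum_expectedEmptyBlocks_le_of_twenty_le h20

end Sums

end RandomBipartite

/-- the p-Bernoulli random bipartite graph on two vertex sets of size n ≥ 12,
each of the n² edges present independently with probability p = 2 ln(n)/n, contains a
perfect matching with probability at least 1 − (ln n)²/n. -/
theorem stmt_8 (n : ℕ) (hn : 12 ≤ n) :
    (let p : ℝ := 2 * Real.log n / n
    let μb : Measure Bool :=
      ENNReal.ofReal p • Measure.dirac true + ENNReal.ofReal (1 - p) • Measure.dirac false
    let μ : Measure (Fin n × Fin n → Bool) := Measure.pi fun _ => μb
    ENNReal.ofReal (1 - Real.log n ^ 2 / n) ≤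
      μ {ω | ∃ σ : Equiv.Perm (Fin n), ∀ x : Fin n, ω (x, σ x) = true}) := by
  intro p μb μ
  have hp : p ∈ unitInterval :=
    ⟨by positivity,
      div_le_one_of_le₀ (RandomBipartite.two_mul_log_le_self (by positivity)) (by positivity)⟩
  have hμb : μb = ProbabilityTheory.bernoulliMeasure true false ⟨p, hp⟩ :=
    RandomBipartite.ofReal_smul_dirac_add_eq_bernoulliMeasure true false ⟨p, hp⟩
  have hsum : ∑ j ∈ Finset.range (Fintype.card (Fin n)),
      RandomBipartite.expectedEmptyBlocks (Fintype.card (Fin n)) (1 - p) j ≤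
        Real.log n ^ 2 / n := by
    rw [Fintype.card_fin]
    exact RandomBipartite.sum_expectedEmptyBlocks_le hn
  simp only [μ, hμb]
  exact RandomBipartite.ofReal_one_sub_le_pi_exists_equiv ⟨p, hp⟩ rfl hsum
end

section
/- For every constant c > 0 there exist a constant C > 0 and an integer N such that for all integers n ≥ N and all integers s with 0 ≤ s ≤ (ln n)^c, setting m = n + s, the following holds. Independently: each left vertex i ∈ {1,…,n} chooses a uniformly random 2-element subset L_i ⊆ {1,…,n}, and each right vertex j ∈ {1,…,n} chooses a uniformly random 3-element subset R_j ⊆ {1,…,m}. Form the bipartite graph on left vertices {1,…,n} and right vertices {1,…,n} with an edge between i and j if and only if j ∈ L_i or i ∈ R_j (left vertices being identified with the first n elements of {1,…,m}). Then the probability that this graph contains a perfect matching is at least 1 − C/n. Consequently the (2,3)-cross code achieves the probabilistic recovery threshold of n when the number of stragglers is polylogarithmic in n. -/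
open scoped Classical

/-!
By Hall's theorem, a bipartite graph between two sets of `n` vertices without a perfect matching has
an empty `(p + 1) × b` rectangle for some `p + b = n`. A fixed such rectangle is empty with
probability at most `(p / n) ^ (d₁ (p + 1)) * ((b + s) / (n + s)) ^ (d₂ b)`. For `d₁ ≥ 2` and
`d₂ ≥ 3` one factor `(p / n) ^ p` cancels each of the binomial coefficients counting the rectangles,
up to `(n / b) ^ b`, and the two remaining factors `p / n` lead to a prefactor
`p b / n ^ 2 ≤ min p b / n`. The rest is exponentially small in `min p b`, so that the union bound
over all rectangles sums to `O(1 / n)`.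
The number `s` of stragglers may be as large as a constant times `n ^ (1 / 3)`.
-/

namespace CrossCode

open Finset Real

section Binomial

lemma choose_mul_pow_le_pow_mul_choose {d n : ℕ} (h : d ≤ n) (k : ℕ) :
    d.choose k * n ^ k ≤ d ^ k * n.choose k := by
  induction k with
  | zero => simp
  | succ k ih =>
    have hsub : (d - k) * n ≤ d * (n - k) := by
      rw [Nat.sub_mul, Nat.mul_sub, mul_comm d k]
      exact Nat.sub_le_sub_left (Nat.mul_le_mul_left _ h) _
    refine Nat.le_of_mul_le_mul_right ?_ k.succ_pos
    calc d.choose (k + 1) * n ^ (k + 1) * (k + 1)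
        = d.choose (k + 1) * (k + 1) * n ^ (k + 1) := by ring
      _ = d.choose k * n ^ k * ((d - k) * n) := by rw [Nat.choose_succ_right_eq]; ring
      _ ≤ d ^ k * n.choose k * (d * (n - k)) := Nat.mul_le_mul ih hsub
      _ = d ^ (k + 1) * (n.choose (k + 1) * (k + 1)) := by rw [Nat.choose_succ_right_eq]; ring
      _ = d ^ (k + 1) * n.choose (k + 1) * (k + 1) := by ring

lemma choose_le_div_pow_mul_choose {d n : ℕ} (h : d ≤ n) (k : ℕ) :
    (d.choose k : ℝ) ≤ ((d : ℝ) / n) ^ k * n.choose k := by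
  rcases n.eq_zero_or_pos with rfl | hn
  · obtain rfl := Nat.le_zero.1 h
    cases k <;> simp
  · rw [div_pow, div_mul_eq_mul_div, le_div_iff₀ (by positivity)]
    exact_mod_cast choose_mul_pow_le_pow_mul_choose h k

lemma choose_mul_pow_mul_pow_le_add_pow {R : Type*} [CommSemiring R] [PartialOrder R]
    [IsOrderedRing R] {x y : R} (hx : 0 ≤ x) (hy : 0 ≤ y) (p b : ℕ) :
    ((p + b).choose p : R) * x ^ p * y ^ b ≤ (x + y) ^ (p + b) := by
  rw [(Commute.all x y).add_pow', mul_assoc, ← nsmul_eq_mul]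
  exact single_le_sum (f := fun m : ℕ × ℕ ↦ (p + b).choose m.1 • (x ^ m.1 * y ^ m.2))
    (fun m _ ↦ nsmul_nonneg (mul_nonneg (pow_nonneg hx _) (pow_nonneg hy _)) _)
    (HasAntidiagonal.mem_antidiagonal.2 rfl : (p, b) ∈ antidiagonal (p + b))

lemma choose_mul_div_pow_le {p b : ℕ} (hb : 0 < b) :
    ((p + b).choose p : ℝ) * (p / (p + b)) ^ p ≤ ((p + b) / b) ^ b := by
  have hone : (p : ℝ) / (p + b) + b / (p + b) = 1 := by field_simp
  have hbinom := choose_mul_pow_mul_pow_le_add_pow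
    (show (0 : ℝ) ≤ p / (p + b) by positivity) (show (0 : ℝ) ≤ b / (p + b) by positivity) p b
  rw [hone, one_pow] at hbinom
  rwa [← inv_div (b : ℝ), inv_pow, ← one_div, le_div_iff₀ (by positivity)]

lemma cast_choose_succ_right_eq (p b : ℕ) :
    ((p + b).choose (p + 1) : ℝ) = (p + b).choose p * (b / (p + 1)) := by
  have h := Nat.choose_succ_right_eq (p + b) p
  rw [Nat.add_sub_cancel_left] at h
  rw [← mul_div_assoc, eq_div_iff (by positivity)]
  exact_mod_cast h

end Binomial

section RandomGraph

variable {α β γ : Type*} [Fintype α] [Fintype β] [Fintype γ]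

/-- Families of `k`-element subsets of `β` indexed by `α`: the sample space in which every `i : α`
independently chooses a uniform `k`-subset of `β`. -/
abbrev SetFamily (α β : Type*) (k : ℕ) : Type _ :=
  {f : α → Finset β // ∀ i, (f i).card = k}

/-- The sample space of the `(d₁, d₂)`-cross code, restricted to a set `α` of responding workers:
every `i : α` chooses `d₁` data partitions in `β`, and every partition chooses `d₂` workers among
the set `γ` of all workers. -/
abbrev Config (α β γ : Type*) (d₁ d₂ : ℕ) : Type _ :=
  SetFamily α β d₁ × SetFamily β γ d₂

/-- Adjacency in the bipartite support graph between the responding workers, embedded in the set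
of all workers by `e`, and the data partitions. -/
abbrev Adj (e : α ↪ γ) (ω : Config α β γ d₁ d₂) (i : α) (j : β) : Prop :=
  j ∈ ω.1.val i ∨ e i ∈ ω.2.val j

lemma exists_empty_rectangle_of_not_exists_equiv (hαβ : Fintype.card α = Fintype.card β)
    {E : α → β → Prop} (h : ¬ ∃ σ : α ≃ β, ∀ i, E i (σ i)) :
    ∃ p b, p + b = Fintype.card α ∧ ∃ (A : Finset α) (B : Finset β),
      #A = p + 1 ∧ #B = b ∧ ∀ i ∈ A, ∀ j ∈ B, ¬ E i j := by
  have hdeficient : ∃ A : Finset α, #{j | ∃ i ∈ A, E i j} < #A := by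
    by_contra! hall
    obtain ⟨f, hf, hfE⟩ := (Fintype.all_card_le_filter_rel_iff_exists_injective E).1 hall
    exact h ⟨.ofBijective f ((Fintype.bijective_iff_injective_and_card f).2 ⟨hf, hαβ⟩), hfE⟩
  obtain ⟨A, hA⟩ := hdeficient
  have hAcard : #A ≤ Fintype.card α := card_le_univ A
  have hroom : Fintype.card α - (#A - 1) ≤ #({j | ∃ i ∈ A, E i j} : Finset β)ᶜ := by
    rw [card_compl]
    omega
  obtain ⟨B, hBsub, hBcard⟩ := exists_subset_card_eq hroom
  refine ⟨#A - 1, #B, by omega, A, B, by omega, rfl, fun i hi j hj hE ↦ ?_⟩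
  exact mem_compl.1 (hBsub hj) (mem_filter.2 ⟨mem_univ j, i, hi, hE⟩)

variable [DecidableEq α] [DecidableEq β] [DecidableEq γ] {d₁ d₂ : ℕ}

lemma card_filter_forall_subset (k : ℕ) (A : Finset α) (D : Finset β) :
    #{f : SetFamily α β k | ∀ i ∈ A, f.val i ⊆ D} =
      (#D).choose k ^ #A * (Fintype.card β).choose k ^ #Aᶜ := by
  have hmap : ({f : SetFamily α β k | ∀ i ∈ A, f.val i ⊆ D} : Finset _).map
      (Function.Embedding.subtype _) =
        Fintype.piFinset fun i ↦ powersetCard k (if i ∈ A then D else univ) := by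
    ext f
    simp only [mem_map, mem_filter, mem_univ, true_and, Function.Embedding.subtype_apply,
      Subtype.exists, exists_and_left, exists_prop, exists_eq_right_right, Fintype.mem_piFinset,
      mem_powersetCard, forall_and]
    refine and_congr_left fun _ ↦ forall_congr' fun i ↦ ?_
    split_ifs with hi <;> simp [hi]
  rw [← card_map, hmap, Fintype.card_piFinset, ← prod_mul_prod_compl A]
  congr 1
  · exact prod_eq_pow_card fun i hi ↦ by simp [hi]
  · exact prod_eq_pow_card fun i hi ↦ by simp [mem_compl.1 hi]

lemma card_filter_forall_subset_le (k : ℕ) (A : Finset α) (D : Finset β) :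
    (#{f : SetFamily α β k | ∀ i ∈ A, f.val i ⊆ D} : ℝ) ≤
      ((#D : ℝ) / Fintype.card β) ^ (k * #A) * Fintype.card (SetFamily α β k) := by
  have htotal : Fintype.card (SetFamily α β k) = (Fintype.card β).choose k ^ Fintype.card α := by
    simpa using card_filter_forall_subset (α := α) (β := β) k ∅ ∅
  rw [card_filter_forall_subset, htotal, ← card_add_card_compl A, pow_add, pow_mul]
  push_cast
  rw [← mul_assoc, ← mul_pow]
  gcongr
  exact choose_le_div_pow_mul_choose (card_le_univ D) k

lemma card_filter_empty_rectangle_le (e : α ↪ γ) (A : Finset α) (B : Finset β) :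
    (#{ω : Config α β γ d₁ d₂ | ∀ i ∈ A, ∀ j ∈ B, ¬ Adj e ω i j} : ℝ) ≤
      ((#Bᶜ : ℝ) / Fintype.card β) ^ (d₁ * #A) *
        ((#(A.map e)ᶜ : ℝ) / Fintype.card γ) ^ (d₂ * #B) *
        Fintype.card (Config α β γ d₁ d₂) := by
  have hsub : ({ω : Config α β γ d₁ d₂ | ∀ i ∈ A, ∀ j ∈ B, ¬ Adj e ω i j} : Finset _) ⊆
      ({f : SetFamily α β d₁ | ∀ i ∈ A, f.val i ⊆ Bᶜ} : Finset _) ×ˢ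
        ({g : SetFamily β γ d₂ | ∀ j ∈ B, g.val j ⊆ (A.map e)ᶜ} : Finset _) := by
    intro ω hω
    simp only [mem_filter, mem_univ, true_and, not_or] at hω
    simp only [mem_product, mem_filter, mem_univ, true_and]
    refine ⟨fun i hi ↦ subset_compl_comm.1 fun j hj ↦ ?_,
      fun j hj ↦ subset_compl_comm.1 fun x hx ↦ ?_⟩
    · exact mem_compl.2 (hω i hi j hj).1
    · obtain ⟨i, hi, rfl⟩ := mem_map.1 hx
      exact mem_compl.2 (hω i hi j hj).2
  calc (#{ω : Config α β γ d₁ d₂ | ∀ i ∈ A, ∀ j ∈ B, ¬ Adj e ω i j} : ℝ)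
      ≤ #{f : SetFamily α β d₁ | ∀ i ∈ A, f.val i ⊆ Bᶜ} *
          #{g : SetFamily β γ d₂ | ∀ j ∈ B, g.val j ⊆ (A.map e)ᶜ} := by
        exact_mod_cast (card_le_card hsub).trans_eq (card_product _ _)
    _ ≤ _ := mul_le_mul (card_filter_forall_subset_le d₁ A Bᶜ)
        (card_filter_forall_subset_le d₂ B (A.map e)ᶜ) (by positivity) (by positivity)
    _ = _ := by rw [Fintype.card_prod]; push_cast; ring

/-- Upper bound for the expected number of empty `(p + 1) × b` rectangles in the support graph on
`p + b` responding workers and `p + b` data partitions, with `s` stragglers. -/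
noncomputable def rectangleBound (d₁ d₂ s p b : ℕ) : ℝ :=
  (p + b).choose (p + 1) * (p + b).choose b *
    (((p : ℝ) / (p + b)) ^ (d₁ * (p + 1)) * (((b : ℝ) + s) / (p + b + s)) ^ (d₂ * b))

lemma card_biUnion_empty_rectangle_le (e : α ↪ γ) (hαβ : Fintype.card α = Fintype.card β)
    {s p b : ℕ} (hγ : Fintype.card γ = Fintype.card α + s) (hpb : p + b = Fintype.card α) :
    (#((powersetCard (p + 1) univ ×ˢ powersetCard b univ).biUnion fun AB : Finset α × Finset β ↦
        {ω : Config α β γ d₁ d₂ | ∀ i ∈ AB.1, ∀ j ∈ AB.2, ¬ Adj e ω i j}) : ℝ) ≤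
      rectangleBound d₁ d₂ s p b * Fintype.card (Config α β γ d₁ d₂) := by
  refine (Nat.cast_le.2 card_biUnion_le).trans ?_
  rw [Nat.cast_sum]
  refine (sum_le_card_nsmul _ _ ((((p : ℝ) / (p + b)) ^ (d₁ * (p + 1)) *
    (((b : ℝ) + s) / (p + b + s)) ^ (d₂ * b)) * Fintype.card (Config α β γ d₁ d₂)) ?_).trans_eq ?_
  · rintro ⟨A, B⟩ hAB
    obtain ⟨hA, hB⟩ : #A = p + 1 ∧ #B = b := by simpa using hAB
    refine (card_filter_empty_rectangle_le e A B).trans ?_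
    have hBcompl : #Bᶜ = p := by rw [card_compl]; omega
    have hAcompl : #(A.map e)ᶜ ≤ b + s := by rw [card_compl, card_map]; omega
    rw [hA, hB, hBcompl, hγ, ← hαβ, ← hpb]
    push_cast
    gcongr
    exact_mod_cast hAcompl
  · rw [card_product, card_powersetCard, card_powersetCard, card_univ, card_univ, ← hαβ, ← hpb,
      nsmul_eq_mul, rectangleBound]
    push_cast
    ring

lemma card_filter_not_exists_matching_le (e : α ↪ γ) (hαβ : Fintype.card α = Fintype.card β)
    {s : ℕ} (hγ : Fintype.card γ = Fintype.card α + s) :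
    (#{ω : Config α β γ d₁ d₂ | ¬ ∃ σ : α ≃ β, ∀ i, Adj e ω i (σ i)} : ℝ) ≤
      (∑ x ∈ antidiagonal (Fintype.card α), rectangleBound d₁ d₂ s x.1 x.2) *
        Fintype.card (Config α β γ d₁ d₂) := by
  let obstructed (x : ℕ × ℕ) : Finset (Config α β γ d₁ d₂) :=
    (powersetCard (x.1 + 1) univ ×ˢ powersetCard x.2 univ).biUnion fun AB : Finset α × Finset β ↦
      {ω | ∀ i ∈ AB.1, ∀ j ∈ AB.2, ¬ Adj e ω i j}
  have hcover : ({ω : Config α β γ d₁ d₂ | ¬ ∃ σ : α ≃ β, ∀ i, Adj e ω i (σ i)} : Finset _) ⊆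
      (antidiagonal (Fintype.card α)).biUnion obstructed := by
    intro ω hω
    obtain ⟨p, b, hpb, A, B, hA, hB, hempty⟩ :=
      exists_empty_rectangle_of_not_exists_equiv hαβ (mem_filter.1 hω).2
    refine mem_biUnion.2 ⟨(p, b), HasAntidiagonal.mem_antidiagonal.2 hpb,
      mem_biUnion.2 ⟨(A, B), ?_, ?_⟩⟩
    · exact mem_product.2 ⟨mem_powersetCard_univ.2 hA, mem_powersetCard_univ.2 hB⟩
    · exact mem_filter.2 ⟨mem_univ ω, hempty⟩
  calc (#{ω : Config α β γ d₁ d₂ | ¬ ∃ σ : α ≃ β, ∀ i, Adj e ω i (σ i)} : ℝ)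
      ≤ ∑ x ∈ antidiagonal (Fintype.card α), (#(obstructed x) : ℝ) := by
        exact_mod_cast (card_le_card hcover).trans card_biUnion_le
    _ ≤ ∑ x ∈ antidiagonal (Fintype.card α),
          rectangleBound d₁ d₂ s x.1 x.2 * Fintype.card (Config α β γ d₁ d₂) :=
        sum_le_sum fun x hx ↦ card_biUnion_empty_rectangle_le e hαβ hγ
          (HasAntidiagonal.mem_antidiagonal.1 hx)
    _ = _ := (sum_mul ..).symm

end RandomGraph

section Estimates

lemma rectangleBound_anti {d₁ d₁' d₂ d₂' : ℕ} (h₁ : d₁ ≤ d₁') (h₂ : d₂ ≤ d₂') (s p b : ℕ) :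
    rectangleBound d₁' d₂' s p b ≤ rectangleBound d₁ d₂ s p b := by
  have hp : (p : ℝ) / (p + b) ≤ 1 := div_le_one_of_le₀ (by simp) (by positivity)
  have hb : ((b : ℝ) + s) / (p + b + s) ≤ 1 := div_le_one_of_le₀ (by simp) (by positivity)
  unfold rectangleBound
  gcongr _ * (?_ * ?_)
  · exact pow_le_pow_of_le_one (by positivity) hp (by gcongr)
  · exact pow_le_pow_of_le_one (by positivity) hb (by gcongr)

/-- The base of the exponential factor in the estimate `rectangleBound_two_three_le` of
`rectangleBound 2 3 s p b`, as a function of real parameters. -/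
noncomputable def rectangleRatio (s p b : ℝ) : ℝ :=
  ((p + b) / b) ^ 2 * ((b + s) / (p + b + s)) ^ 3

lemma rectangleBound_two_three_le {s p b : ℕ} (hb : 0 < b) :
    rectangleBound 2 3 s p b ≤ (p : ℝ) * b / (p + b) ^ 2 * rectangleRatio s p b ^ b := by
  set x : ℝ := ((b : ℝ) + s) / (p + b + s)
  have hcoeff : (b : ℝ) / (p + 1) * (p / (p + b)) ^ 2 ≤ p * b / (p + b) ^ 2 := by
    rw [div_pow, div_mul_div_comm, div_le_div_iff₀ (by positivity) (by positivity)]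
    have : (0 : ℝ) ≤ b * p * (p + b) ^ 2 := by positivity
    nlinarith
  calc rectangleBound 2 3 s p b
      = ((p + b).choose p * (p / (p + b) : ℝ) ^ p) ^ 2 *
          (b / (p + 1) * (p / (p + b)) ^ 2) * x ^ (3 * b) := by
        rw [rectangleBound, cast_choose_succ_right_eq, ← Nat.choose_symm_add]
        ring
    _ ≤ (((p + b) / b : ℝ) ^ b) ^ 2 * (p * b / (p + b) ^ 2) * x ^ (3 * b) := by
        gcongr
        exact choose_mul_div_pow_le hb
    _ = _ := by
        rw [rectangleRatio, mul_pow, ← pow_mul, ← pow_mul, ← pow_mul, mul_comm b 2]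
        ring

lemma rectangleRatio_le_half {s p b : ℝ} (hp : 0 ≤ p) (hb : 1 ≤ b) (hs : 0 ≤ s) (hbs : b ≤ 6 * s)
    (hn : 686 * s ^ 3 ≤ p + b) :
    rectangleRatio s p b ≤ 1 / 2 := by
  have hpb : 0 < p + b := by linarith
  have hratio : (b + s) / (p + b + s) ≤ 7 * s / (p + b) :=
    div_le_div₀ (by positivity) (by linarith) hpb (by linarith)
  calc rectangleRatio s p b
      ≤ ((p + b) / 1) ^ 2 * (7 * s / (p + b)) ^ 3 := by
        rw [rectangleRatio]
        gcongr
    _ = 343 * s ^ 3 / (p + b) := by field_simp; ring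
    _ ≤ 1 / 2 := by rw [div_le_iff₀ hpb]; linarith

lemma rectangleRatio_le_exp {s p b : ℝ} (hp : 0 ≤ p) (hb : 0 < b) (hs : 0 ≤ s) (hbs : 6 * s ≤ b) :
    rectangleRatio s p b ≤ exp (-(p / (2 * (p + b)))) := by
  have hratio : (b + s) / (p + b + s) * ((p + b) / b) ≤ exp (p / (6 * (p + b))) := by
    refine le_trans ?_ (add_one_le_exp _)
    calc (b + s) / (p + b + s) * ((p + b) / b)
        = s * p / (b * (p + b + s)) + 1 := by field_simp; ring
      _ ≤ b / 6 * p / (b * (p + b)) + 1 := by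
        have hs6 : s ≤ b / 6 := by linarith
        have hle : p + b ≤ p + b + s := le_add_of_nonneg_right hs
        gcongr ?_ + 1
        exact div_le_div₀ (by positivity) (by gcongr) (by positivity) (by gcongr)
      _ = p / (6 * (p + b)) + 1 := by field_simp
  have hfrac : b / (p + b) ≤ exp (-(p / (p + b))) := by
    refine le_trans (le_of_eq ?_) (add_one_le_exp _)
    field_simp
    ring
  calc rectangleRatio s p b
      = b / (p + b) * ((b + s) / (p + b + s) * ((p + b) / b)) ^ 3 := by
        rw [rectangleRatio]
        field_simp
    _ ≤ exp (-(p / (p + b))) * exp (p / (6 * (p + b))) ^ 3 := by gcongr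
    _ = exp (-(p / (2 * (p + b)))) := by
        rw [← exp_nat_mul, ← exp_add]
        congr 1
        field_simp
        ring

lemma exp_neg_quarter_le : exp (-(1 / 4)) ≤ 4 / 5 := by
  rw [exp_neg, inv_le_comm₀ (exp_pos _) (by norm_num)]
  linarith [add_one_le_exp (1 / 4 : ℝ)]

lemma min_mul_add_le_two_mul {x y : ℝ} (hx : 0 ≤ x) (hy : 0 ≤ y) :
    min x y * (x + y) ≤ 2 * (x * y) := by
  have hsum : x + y ≤ 2 * max x y := by
    rw [two_mul]
    exact add_le_add (le_max_left x y) (le_max_right x y)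
  calc min x y * (x + y) ≤ min x y * (2 * max x y) :=
        mul_le_mul_of_nonneg_left hsum (le_min hx hy)
    _ = 2 * (x * y) := by rw [← min_mul_max x y]; ring

lemma rectangleRatio_pow_le {s p b : ℕ} (hb : 0 < b) (hs : 686 * s ^ 3 ≤ p + b) :
    rectangleRatio s p b ^ b ≤ (4 / 5) ^ min p b := by
  have hnonneg : 0 ≤ rectangleRatio s p b := by unfold rectangleRatio; positivity
  rcases le_total (b : ℝ) (6 * s) with hbs | hbs
  · have hhalf := rectangleRatio_le_half p.cast_nonneg (Nat.one_le_cast.2 hb) s.cast_nonneg hbs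
      (by exact_mod_cast hs)
    calc _ ≤ (4 / 5 : ℝ) ^ b := by gcongr; linarith
      _ ≤ (4 / 5) ^ min p b :=
        pow_le_pow_of_le_one (by norm_num) (by norm_num) (min_le_right p b)
  · have hexponent : ((min p b : ℕ) : ℝ) * (1 / 4) ≤ b * (p / (2 * (p + b))) := by
      rw [← mul_div_assoc (b : ℝ), le_div_iff₀ (by positivity), Nat.cast_min]
      linarith [min_mul_add_le_two_mul (p.cast_nonneg (α := ℝ)) b.cast_nonneg]
    calc _ ≤ exp (-(p / (2 * (p + b)))) ^ b := by
          gcongr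
          exact rectangleRatio_le_exp p.cast_nonneg (Nat.cast_pos.2 hb) s.cast_nonneg hbs
      _ ≤ exp (-(1 / 4)) ^ min p b := by
          rw [← exp_nat_mul, ← exp_nat_mul, exp_le_exp]
          linarith
      _ ≤ (4 / 5) ^ min p b := by gcongr; exact exp_neg_quarter_le

lemma rectangleBound_le {d₁ d₂ s p b : ℕ} (hd₁ : 2 ≤ d₁) (hd₂ : 3 ≤ d₂)
    (hs : 686 * s ^ 3 ≤ p + b) :
    rectangleBound d₁ d₂ s p b ≤ (p * (4 / 5) ^ p + b * (4 / 5) ^ b) / (p + b) := by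
  rcases b.eq_zero_or_pos with rfl | hb
  · simp only [rectangleBound, add_zero, Nat.choose_succ_self, Nat.cast_zero, zero_mul]
    positivity
  have hmin : ((min p b : ℕ) : ℝ) * (4 / 5) ^ min p b ≤ p * (4 / 5) ^ p + b * (4 / 5) ^ b := by
    rcases min_choice p b with h | h <;> rw [h]
    · exact le_add_of_nonneg_right (by positivity)
    · exact le_add_of_nonneg_left (by positivity)
  have hmax : ((max p b : ℕ) : ℝ) ≤ p + b := by
    exact_mod_cast max_le_add_of_nonneg p.zero_le b.zero_le
  calc rectangleBound d₁ d₂ s p b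
      ≤ rectangleBound 2 3 s p b := rectangleBound_anti hd₁ hd₂ s p b
    _ ≤ p * b / (p + b) ^ 2 * (4 / 5) ^ min p b := by
        refine (rectangleBound_two_three_le hb).trans ?_
        gcongr
        exact rectangleRatio_pow_le hb hs
    _ = (max p b : ℕ) / (p + b) * ((min p b : ℕ) * (4 / 5) ^ min p b / (p + b)) := by
        have hprod : (p : ℝ) * b = (max p b : ℕ) * (min p b : ℕ) := by
          exact_mod_cast (max_mul_min p b).symm
        rw [hprod, div_mul_div_comm, ← sq]
        ring
    _ ≤ 1 * ((p * (4 / 5) ^ p + b * (4 / 5) ^ b) / (p + b)) := by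
        gcongr
        exact div_le_one_of_le₀ hmax (by positivity)
    _ = _ := one_mul _

lemma sum_range_mul_four_fifths_pow_le (n : ℕ) : ∑ k ∈ range n, (k : ℝ) * (4 / 5) ^ k ≤ 20 := by
  have hsum : HasSum (fun k : ℕ ↦ (k : ℝ) * (4 / 5) ^ k) 20 := by
    have hgeom := hasSum_coe_mul_geometric_of_norm_lt_one (r := (4 / 5 : ℝ)) (by norm_num)
    rwa [show (4 / 5 : ℝ) / (1 - 4 / 5) ^ 2 = 20 by norm_num] at hgeom
  exact sum_le_hasSum _ (fun k _ ↦ by positivity) hsum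

lemma sum_antidiagonal_rectangleBound_le {d₁ d₂ s n : ℕ} (hd₁ : 2 ≤ d₁) (hd₂ : 3 ≤ d₂)
    (hs : 686 * s ^ 3 ≤ n) :
    ∑ x ∈ antidiagonal n, rectangleBound d₁ d₂ s x.1 x.2 ≤ 40 / n := by
  have hterm : ∀ x ∈ antidiagonal n, rectangleBound d₁ d₂ s x.1 x.2 ≤
      (x.1 * (4 / 5) ^ x.1 + x.2 * (4 / 5) ^ x.2) / n := by
    intro x hx
    rw [HasAntidiagonal.mem_antidiagonal] at hx
    rw [← hx] at hs ⊢
    exact_mod_cast rectangleBound_le hd₁ hd₂ hs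
  have hfst : ∑ x ∈ antidiagonal n, (x.1 : ℝ) * (4 / 5) ^ x.1 ≤ 20 := by
    rw [Nat.sum_antidiagonal_eq_sum_range_succ_mk]
    exact sum_range_mul_four_fifths_pow_le _
  have hsnd : ∑ x ∈ antidiagonal n, (x.2 : ℝ) * (4 / 5) ^ x.2 ≤ 20 := by
    rw [← Nat.sum_antidiagonal_swap]
    exact hfst
  calc ∑ x ∈ antidiagonal n, rectangleBound d₁ d₂ s x.1 x.2
      ≤ ∑ x ∈ antidiagonal n, (x.1 * (4 / 5) ^ x.1 + x.2 * (4 / 5) ^ x.2 : ℝ) / n :=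
        sum_le_sum hterm
    _ = (∑ x ∈ antidiagonal n, (x.1 : ℝ) * (4 / 5) ^ x.1 +
          ∑ x ∈ antidiagonal n, (x.2 : ℝ) * (4 / 5) ^ x.2) / n := by
        rw [← sum_div, sum_add_distrib]
    _ ≤ 40 / n := by gcongr; linarith

lemma eventually_mul_log_rpow_pow_le (a c : ℝ) (k : ℕ) :
    ∀ᶠ x : ℝ in Filter.atTop, a * (log x ^ c) ^ k ≤ x := by
  have hlittle := ((isLittleO_log_rpow_rpow_atTop (c * k) one_pos).const_mul_left a).bound one_pos
  filter_upwards [hlittle, Filter.eventually_ge_atTop 1] with x hx hx1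
  rw [rpow_one, one_mul, norm_of_nonneg (zero_le_one.trans hx1)] at hx
  rw [← rpow_mul_natCast (log_nonneg hx1)]
  exact (le_norm_self _).trans hx

end Estimates

end CrossCode

open CrossCode in
theorem stmt_17_general {α β γ : Type*} [Fintype α] [Fintype β] [Fintype γ]
    [DecidableEq α] [DecidableEq β] [DecidableEq γ] [Nonempty α] {d₁ d₂ s : ℕ} (e : α ↪ γ)
    (hαβ : Fintype.card α = Fintype.card β) (hγ : Fintype.card γ = Fintype.card α + s)
    (hd₁ : 2 ≤ d₁) (hd₂ : 3 ≤ d₂) (hs : 686 * s ^ 3 ≤ Fintype.card α) :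
    (1 - 40 / Fintype.card α) * (Fintype.card (Config α β γ d₁ d₂) : ℝ) ≤
      ((Finset.univ.filter fun ω : Config α β γ d₁ d₂ =>
        ∃ σ : α ≃ β, ∀ i, Adj e ω i (σ i)).card : ℝ) := by
  have hbad := (card_filter_not_exists_matching_le (d₁ := d₁) (d₂ := d₂) e hαβ hγ).trans
    (mul_le_mul_of_nonneg_right (sum_antidiagonal_rectangleBound_le hd₁ hd₂ hs) (by positivity))
  have hsplit := Finset.card_filter_add_card_filter_not (s := Finset.univ)
    (fun ω : Config α β γ d₁ d₂ ↦ ∃ σ : α ≃ β, ∀ i, Adj e ω i (σ i))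
  rw [Finset.card_univ] at hsplit
  rw [← hsplit] at hbad ⊢
  push_cast at hbad ⊢
  linarith

/-- the (2,3)-cross code with polylogarithmically many stragglers.  For every
c > 0 there are C > 0 and N such that for all n ≥ N and 0 ≤ s ≤ (ln n)^c (m = n + s):
if each left vertex i of an n+n bipartite graph picks a uniform 2-subset L_i of the n right
vertices and each right vertex j picks a uniform 3-subset R_j of the m workers, with an
edge i–j iff j ∈ L_i or i ∈ R_j (left vertices identified with the first n of the m
workers), then the graph has a perfect matching with probability at least 1 − C/n
(stated by counting: at least (1 − C/n) of all configurations admit a matching). -/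
theorem stmt_17 (c : ℝ) (hc : 0 < c) :
    ∃ C : ℝ, 0 < C ∧ ∃ N : ℕ, ∀ n : ℕ, N ≤ n → ∀ s : ℕ,
      (s : ℝ) ≤ Real.log n ^ c →
      (1 - C / n) *
          (Fintype.card
            ({f : Fin n → Finset (Fin n) // ∀ i, (f i).card = 2} ×
              {g : Fin n → Finset (Fin (n + s)) // ∀ j, (g j).card = 3}) : ℝ) ≤
        ((Finset.univ.filter fun ω :
              {f : Fin n → Finset (Fin n) // ∀ i, (f i).card = 2} ×
                {g : Fin n → Finset (Fin (n + s)) // ∀ j, (g j).card = 3} =>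
            ∃ σ : Equiv.Perm (Fin n), ∀ i : Fin n,
              σ i ∈ ω.1.val i ∨ Fin.castAdd s i ∈ ω.2.val (σ i)).card : ℝ) := by
  obtain ⟨N, hN⟩ := Filter.eventually_atTop.1 <| tendsto_natCast_atTop_atTop.eventually
    (CrossCode.eventually_mul_log_rpow_pow_le 686 c 3)
  refine ⟨40, by norm_num, max N 1, fun n hn s hs ↦ ?_⟩
  have : NeZero n := ⟨Nat.one_le_iff_ne_zero.1 ((le_max_right N 1).trans hn)⟩
  have hcube : 686 * (s : ℝ) ^ 3 ≤ n :=
    le_trans (by gcongr) (hN n ((le_max_left N 1).trans hn))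
  have hgood := stmt_17_general (d₁ := 2) (d₂ := 3) (s := s) (Fin.castAddEmb (n := n) s) rfl
    (by simp only [Fintype.card_fin]) le_rfl le_rfl
    (by rw [Fintype.card_fin]; exact_mod_cast hcube)
  rw [Fintype.card_fin] at hgood
  convert! hgood
end

section
/- Let α ∈ (0,1) be such that d₂ := 2/(1−α) is an integer. Then there exist a constant C > 0 and an integer N such that for all integers n ≥ N and all integers s with 0 ≤ s ≤ n^α, setting m = n + s, the following holds. Independently: each left vertex i ∈ {1,…,n} chooses a uniformly random 2-element subset L_i ⊆ {1,…,n}, and each right vertex j ∈ {1,…,n} chooses a uniformly random d₂-element subset R_j ⊆ {1,…,m}. Form the bipartite graph on left vertices {1,…,n} and right vertices {1,…,n} with an edge between i and j if and only if j ∈ L_i or i ∈ R_j (left vertices being identified with the first n elements of {1,…,m}). Then the probability that this graph contains a perfect matching is at least 1 − C/n. Consequently the (2, 2/(1−α))-cross code achieves the probabilistic recovery threshold of n when the number of stragglers is O(n^α). -/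
open scoped Classical

/-!
By Hall's theorem in its Frobenius–König form, a bipartite graph on `n + n` vertices without perfect
matching has a set `A` of `k` left and a set `B` of `l` right vertices, `k + l = n + 1`, with no
edge in between. Write `N = n + 1`. All choices of `A` avoid `B` with probability at most
`(k / N) ^ (d₁ * k)`, and all choices of `B` avoid `A` with probability at most
`((l + s) / (N + s)) ^ (d₂ * l)`. As `N.choose k * (k / N) ^ k * (l / N) ^ l ≤ 1`, the expected
number of such pairs is at most `k * l / N ^ 2 * ((N / l) ^ 2 * ((l + s) / (N + s)) ^ d₂) ^ l`.

If `l ≥ 2 ^ (-d₂) * N`, the last power decays exponentially in `k`. If `l ≤ 2 ^ (-d₂) * N`, it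
decays exponentially in `l`, because `N ^ 2 * (s / N) ^ d₂` is bounded: this is where `s = O(n ^ α)`
with `2 / (1 - α) ≤ d₂` enters. The factor `k * l / N ^ 2 ≤ min k l / N` makes the sum over
`(k, l)` of order `1 / N`.
-/

section

open Finset

theorem one_sub_mul_card_le_card_filter {Ω : Type*} [Fintype Ω] {p : Ω → Prop} [DecidablePred p]
    {ε : ℝ} (h : (#{ω | ¬ p ω} : ℝ) ≤ ε * Fintype.card Ω) :
    (1 - ε) * Fintype.card Ω ≤ #{ω | p ω} := by
  have card_add_card_not : (#{ω | p ω} + #{ω | ¬ p ω} : ℝ) = Fintype.card Ω :=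
    mod_cast card_filter_add_card_filter_not p
  linarith

theorem exists_edgeless_of_not_exists_equiv {ι κ : Type*} [Fintype ι] [Fintype κ]
    (h : Fintype.card ι = Fintype.card κ) {r : ι → κ → Prop}
    (hr : ¬ ∃ σ : ι ≃ κ, ∀ i, r i (σ i)) :
    ∃ (A : Finset ι) (B : Finset κ), #A + #B = Fintype.card κ + 1 ∧ ∀ i ∈ A, ∀ j ∈ B, ¬ r i j := by
  obtain ⟨A, hA⟩ : ∃ A : Finset ι, #{j | ∃ i ∈ A, r i j} < #A := by
    by_contra! hall
    obtain ⟨φ, φ_inj, hφ⟩ := (Fintype.all_card_le_filter_rel_iff_exists_injective r).1 hall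
    exact hr ⟨.ofBijective φ ((Fintype.bijective_iff_injective_and_card φ).2 ⟨φ_inj, h⟩), hφ⟩
  have card_neighbors_compl := card_add_card_compl {j | ∃ i ∈ A, r i j}
  have card_A_le : #A ≤ Fintype.card κ := h ▸ card_le_univ A
  obtain ⟨B, B_subset, card_B⟩ := exists_subset_card_eq
    (s := ({j | ∃ i ∈ A, r i j} : Finset κ)ᶜ) (n := Fintype.card κ + 1 - #A) (by omega)
  refine ⟨A, B, by omega, fun i hi j hj hij => ?_⟩
  have not_neighbor := B_subset hj
  simp only [mem_compl, mem_filter_univ] at not_neighbor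
  exact not_neighbor ⟨i, hi, hij⟩

theorem choose_mul_add_one_pow_le {a b : ℕ} (hab : a ≤ b) (k : ℕ) :
    a.choose k * (b + 1) ^ k ≤ (a + 1) ^ k * b.choose k := by
  have factor_le (i : ℕ) : (a - i) * (b + 1) ≤ (a + 1) * (b - i) := by
    obtain hia | hai := le_total i a
    · obtain ⟨c, rfl⟩ := Nat.exists_eq_add_of_le hia
      obtain ⟨e, rfl⟩ := Nat.exists_eq_add_of_le hab
      rw [Nat.add_sub_cancel_left, show i + c + e - i = c + e by omega]
      nlinarith
    · simp [Nat.sub_eq_zero_of_le hai]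
  have descFactorial_le :
      a.descFactorial k * (b + 1) ^ k ≤ (a + 1) ^ k * b.descFactorial k := by
    calc a.descFactorial k * (b + 1) ^ k = ∏ i ∈ range k, (a - i) * (b + 1) := by
          simp [Nat.descFactorial_eq_prod_range, prod_mul_distrib]
      _ ≤ ∏ i ∈ range k, (a + 1) * (b - i) := prod_le_prod' fun i _ => factor_le i
      _ = (a + 1) ^ k * b.descFactorial k := by
          simp [Nat.descFactorial_eq_prod_range, prod_mul_distrib]
  simp only [Nat.descFactorial_eq_factorial_mul_choose] at descFactorial_le
  refine Nat.le_of_mul_le_mul_left ?_ k.factorial_pos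
  linarith

theorem choose_le_div_pow_mul_choose {a b : ℕ} (hab : a ≤ b) (k : ℕ) :
    (a.choose k : ℝ) ≤ ((a + 1) / (b + 1)) ^ k * b.choose k := by
  rw [div_pow, div_mul_eq_mul_div, le_div_iff₀ (by positivity)]
  exact_mod_cast choose_mul_add_one_pow_le hab k

/-- A choice of a `k`-element subset of `β` for every index in `ι`. A uniformly random element
of this type is an independent uniformly random choice of one `k`-subset per index. -/
abbrev SubsetFamily (ι β : Type*) (k : ℕ) : Type _ :=
  {f : ι → Finset β // ∀ i, #(f i) = k}

section SupportGraph

variable {ι κ β : Type*} [Fintype ι] [Fintype κ] [Fintype β]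

theorem card_subsetFamily_filter_subset [DecidableEq ι] [DecidableEq β] (k : ℕ) (A : Finset ι)
    (S : Finset β) :
    #{f : SubsetFamily ι β k | ∀ i ∈ A, f.1 i ⊆ S} =
      (#S).choose k ^ #A * (Fintype.card β).choose k ^ #Aᶜ := by
  have map_val_eq :
      ({f : SubsetFamily ι β k | ∀ i ∈ A, f.1 i ⊆ S} : Finset _).map (.subtype _) =
        Fintype.piFinset fun i => powersetCard k (if i ∈ A then S else univ) := by
    ext f
    have subset_ite : (∀ i, f i ⊆ if i ∈ A then S else univ) ↔ ∀ i ∈ A, f i ⊆ S :=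
      forall_congr' fun i => by split_ifs with hi <;> simp [hi]
    simp [mem_powersetCard, forall_and, subset_ite]
  rw [← card_map, map_val_eq, Fintype.card_piFinset]
  simp only [card_powersetCard, apply_ite card, apply_ite (Nat.choose · k), card_univ]
  simp [prod_ite, filter_not, compl_eq_univ_sdiff]

theorem card_subsetFamily [DecidableEq ι] (k : ℕ) :
    Fintype.card (SubsetFamily ι β k) = (Fintype.card β).choose k ^ Fintype.card ι := by
  simpa using card_subsetFamily_filter_subset k (∅ : Finset ι) (∅ : Finset β)

theorem card_subsetFamily_filter_subset_le [DecidableEq ι] [DecidableEq β] (k : ℕ) (A : Finset ι)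
    (S : Finset β) :
    (#{f : SubsetFamily ι β k | ∀ i ∈ A, f.1 i ⊆ S} : ℝ) ≤
      ((#S + 1) / (Fintype.card β + 1)) ^ (k * #A) * Fintype.card (SubsetFamily ι β k) := by
  rw [card_subsetFamily_filter_subset, card_subsetFamily]
  push_cast
  calc ((#S).choose k : ℝ) ^ #A * (Fintype.card β).choose k ^ #Aᶜ
      ≤ (((#S + 1) / (Fintype.card β + 1)) ^ k * (Fintype.card β).choose k) ^ #A *
          (Fintype.card β).choose k ^ #Aᶜ := by
        gcongr
        exact choose_le_div_pow_mul_choose (card_le_univ S) k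
    _ = ((#S + 1) / (Fintype.card β + 1)) ^ (k * #A) *
          (Fintype.card β).choose k ^ Fintype.card ι := by
        rw [← card_add_card_compl A, pow_add, mul_pow, pow_mul, mul_assoc]

/-- The support graph of a cross code has a perfect matching: left vertex `i` and right vertex `j`
are adjacent if `i` picks `j` or `j` picks `i`. The right vertices pick from the larger set `β` of
all workers, into which the left vertices are embedded by `e`. -/
def HasPerfectMatching (e : ι ↪ β) (f : ι → Finset κ) (g : κ → Finset β) : Prop :=
  ∃ σ : ι ≃ κ, ∀ i, σ i ∈ f i ∨ e i ∈ g (σ i)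

variable [DecidableEq κ]

/-- The support graph of a cross code has no edge between `A` and `B`. -/
def IsEdgeless [DecidableEq β] (e : ι ↪ β) (f : ι → Finset κ) (g : κ → Finset β)
    (A : Finset ι) (B : Finset κ) : Prop :=
  (∀ i ∈ A, f i ⊆ Bᶜ) ∧ ∀ j ∈ B, g j ⊆ (A.map e)ᶜ

theorem exists_isEdgeless_of_not_hasPerfectMatching [DecidableEq β]
    (h : Fintype.card ι = Fintype.card κ)
    {e : ι ↪ β} {f : ι → Finset κ} {g : κ → Finset β} (hfg : ¬ HasPerfectMatching e f g) :
    ∃ A B, #A + #B = Fintype.card κ + 1 ∧ IsEdgeless e f g A B := by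
  obtain ⟨A, B, hAB, hr⟩ := exists_edgeless_of_not_exists_equiv
    (r := fun i j => j ∈ f i ∨ e i ∈ g j) h hfg
  simp only [not_or] at hr
  refine ⟨A, B, hAB, fun i hi j hj => mem_compl.2 fun hjB => (hr i hi j hjB).1 hj,
    fun j hj x hx => mem_compl.2 fun hxA => ?_⟩
  obtain ⟨i, hi, rfl⟩ := mem_map.1 hxA
  exact (hr i hi j hj).2 hx

theorem card_filter_isEdgeless_le [DecidableEq ι] [DecidableEq β] (e : ι ↪ β) (d₁ d₂ : ℕ)
    {n s : ℕ} (hκ : Fintype.card κ = n) (hβ : Fintype.card β = n + s)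
    {A : Finset ι} {B : Finset κ} (hAB : #A + #B = n + 1) :
    (#{ω : SubsetFamily ι κ d₁ × SubsetFamily κ β d₂ | IsEdgeless e ω.1.1 ω.2.1 A B} : ℝ) ≤
      (#A / (n + 1)) ^ (d₁ * #A) * ((#B + s) / (n + 1 + s)) ^ (d₂ * #B) *
        Fintype.card (SubsetFamily ι κ d₁ × SubsetFamily κ β d₂) := by
  have card_compl_B : (#Bᶜ + 1 : ℝ) = #A := by
    have := card_add_card_compl B
    exact_mod_cast (by omega : #Bᶜ + 1 = #A)
  have card_compl_A : (#(A.map e)ᶜ + 1 : ℝ) = #B + s := by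
    have := card_add_card_compl (A.map e)
    rw [card_map] at this
    exact_mod_cast (by omega : #(A.map e)ᶜ + 1 = #B + s)
  have left_le := card_subsetFamily_filter_subset_le d₁ A Bᶜ
  have right_le := card_subsetFamily_filter_subset_le d₂ B (A.map e)ᶜ
  rw [card_compl_B, hκ] at left_le
  rw [card_compl_A, hβ, Nat.cast_add, add_right_comm] at right_le
  have filter_eq_product :
      ({ω : SubsetFamily ι κ d₁ × SubsetFamily κ β d₂ | IsEdgeless e ω.1.1 ω.2.1 A B} : Finset _) =
        ({f : SubsetFamily ι κ d₁ | ∀ i ∈ A, f.1 i ⊆ Bᶜ} : Finset _) ×ˢ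
          ({g : SubsetFamily κ β d₂ | ∀ j ∈ B, g.1 j ⊆ (A.map e)ᶜ} : Finset _) := by
    ext ω
    simp only [mem_product, mem_filter_univ]
    rfl
  rw [filter_eq_product, card_product, Fintype.card_prod, Nat.cast_mul, Nat.cast_mul,
    mul_mul_mul_comm]
  gcongr

/-- A bound for the expected number of pairs `(A, B)` of `k` left and `l` right vertices,
`k + l = n + 1`, with no edge between them. -/
noncomputable def edgelessBound (d₁ d₂ n s k l : ℕ) : ℝ :=
  n.choose k * n.choose l *
    ((k / (n + 1)) ^ (d₁ * k) * ((l + s) / (n + 1 + s)) ^ (d₂ * l))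

theorem card_not_hasPerfectMatching_le [DecidableEq ι] (e : ι ↪ β) (d₁ d₂ : ℕ) {n s : ℕ}
    (hι : Fintype.card ι = n) (hκ : Fintype.card κ = n) (hβ : Fintype.card β = n + s) :
    (#{ω : SubsetFamily ι κ d₁ × SubsetFamily κ β d₂ |
        ¬ HasPerfectMatching e ω.1.1 ω.2.1} : ℝ) ≤
      (∑ p ∈ antidiagonal (n + 1), edgelessBound d₁ d₂ n s p.1 p.2) *
        Fintype.card (SubsetFamily ι κ d₁ × SubsetFamily κ β d₂) := by
  set T := Fintype.card (SubsetFamily ι κ d₁ × SubsetFamily κ β d₂)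
  let pairs (p : ℕ × ℕ) : Finset (Finset ι × Finset κ) :=
    powersetCard p.1 univ ×ˢ powersetCard p.2 univ
  let edgelessChoices (q : Finset ι × Finset κ) :
      Finset (SubsetFamily ι κ d₁ × SubsetFamily κ β d₂) :=
    {ω | IsEdgeless e ω.1.1 ω.2.1 q.1 q.2}
  have subset_biUnion : ({ω : SubsetFamily ι κ d₁ × SubsetFamily κ β d₂ |
      ¬ HasPerfectMatching e ω.1.1 ω.2.1} : Finset _) ⊆
      (antidiagonal (n + 1)).biUnion fun p => (pairs p).biUnion edgelessChoices := by
    intro ω hω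
    obtain ⟨A, B, hAB, hω⟩ := exists_isEdgeless_of_not_hasPerfectMatching (hι.trans hκ.symm)
      (mem_filter.1 hω).2
    simp only [mem_biUnion, HasAntidiagonal.mem_antidiagonal]
    exact ⟨(#A, #B), hκ ▸ hAB, (A, B), by simp [pairs], by simpa [edgelessChoices] using hω⟩
  calc (#{ω : SubsetFamily ι κ d₁ × SubsetFamily κ β d₂ |
        ¬ HasPerfectMatching e ω.1.1 ω.2.1} : ℝ)
      ≤ ∑ p ∈ antidiagonal (n + 1), ∑ q ∈ pairs p, (#(edgelessChoices q) : ℝ) := by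
        exact_mod_cast (card_le_card subset_biUnion).trans
          (card_biUnion_le.trans (sum_le_sum fun p _ => card_biUnion_le))
    _ ≤ ∑ p ∈ antidiagonal (n + 1), ∑ _q ∈ pairs p,
          (p.1 / (n + 1)) ^ (d₁ * p.1) * ((p.2 + s) / (n + 1 + s)) ^ (d₂ * p.2) * (T : ℝ) := by
        gcongr with p hp q hq
        obtain ⟨card_fst, card_snd⟩ : #q.1 = p.1 ∧ #q.2 = p.2 := by simpa [pairs] using hq
        rw [HasAntidiagonal.mem_antidiagonal, ← card_fst, ← card_snd] at hp
        rw [← card_fst, ← card_snd]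
        exact card_filter_isEdgeless_le e d₁ d₂ hκ hβ hp
    _ = (∑ p ∈ antidiagonal (n + 1), edgelessBound d₁ d₂ n s p.1 p.2) * T := by
        simp [sum_mul, pairs, edgelessBound, hι, hκ, mul_assoc]

end SupportGraph

theorem pow_mul_pow_mul_choose_le_add_pow {x y : ℝ} (hx : 0 ≤ x) (hy : 0 ≤ y) (k l : ℕ) :
    x ^ k * y ^ l * (k + l).choose k ≤ (x + y) ^ (k + l) := by
  have term_le := single_le_sum (f := fun i => x ^ i * y ^ (k + l - i) * ((k + l).choose i : ℝ))
    (fun i _ => by positivity) (mem_range.2 (by omega : k < k + l + 1))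
  rwa [← add_pow, Nat.add_sub_cancel_left] at term_le

theorem choose_eq_choose_succ_mul_div {n k l : ℕ} (h : k + l = n + 1) :
    (n.choose k : ℝ) = (n + 1).choose k * (l / (n + 1)) := by
  have choose_mul := Nat.choose_mul_succ_eq n k
  rw [← h, Nat.add_sub_cancel_left, h] at choose_mul
  rw [mul_div_assoc', eq_div_iff (by positivity)]
  exact_mod_cast choose_mul

theorem choose_mul_choose_mul_pow_le {n k l : ℕ} (h : k + l = n + 1) (hl : 0 < l) :
    (n.choose k : ℝ) * n.choose l * (k / (n + 1)) ^ (2 * k) ≤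
      l * k / (n + 1) ^ 2 * ((n + 1) / l) ^ (2 * l) := by
  have k_add_l : (k + l : ℝ) = n + 1 := mod_cast h
  have choose_mul_pow_le : ((n + 1).choose k : ℝ) * (k / (n + 1)) ^ k ≤ ((n + 1) / l) ^ l := by
    have binomial_term_le :=
      pow_mul_pow_mul_choose_le_add_pow (x := k / (n + 1)) (y := l / (n + 1))
        (by positivity) (by positivity) k l
    rw [← add_div, k_add_l, div_self (by positivity), one_pow, h] at binomial_term_le
    rw [← inv_div (l : ℝ), inv_pow, ← one_div, le_div_iff₀ (by positivity)]
    linarith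
  have choose_symm : (n + 1).choose l = (n + 1).choose k := by
    rw [← h, Nat.choose_symm_add]
  calc (n.choose k : ℝ) * n.choose l * (k / (n + 1)) ^ (2 * k)
      = l * k / (n + 1) ^ 2 * ((n + 1).choose k * (k / (n + 1)) ^ k) ^ 2 := by
        rw [choose_eq_choose_succ_mul_div h,
          choose_eq_choose_succ_mul_div ((add_comm l k).trans h),
          choose_symm]
        field_simp
        ring
    _ ≤ l * k / (n + 1) ^ 2 * (((n + 1) / l) ^ l) ^ 2 := by gcongr
    _ = l * k / (n + 1) ^ 2 * ((n + 1) / l) ^ (2 * l) := by rw [← pow_mul, mul_comm l 2]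

theorem edgelessBound_le_mul_pow {d₁ n k l : ℕ} (hd₁ : 2 ≤ d₁) (d₂ s : ℕ) (h : k + l = n + 1)
    (hl : 0 < l) :
    edgelessBound d₁ d₂ n s k l ≤
      l * k / (n + 1) ^ 2 * (((n + 1) / l) ^ 2 * ((l + s) / (n + 1 + s)) ^ d₂) ^ l := by
  have ratio_le_one : (k / (n + 1) : ℝ) ≤ 1 := by
    rw [div_le_one (by positivity)]
    exact_mod_cast (by omega : k ≤ n + 1)
  calc edgelessBound d₁ d₂ n s k l
      ≤ n.choose k * n.choose l *
          ((k / (n + 1)) ^ (2 * k) * ((l + s) / (n + 1 + s)) ^ (d₂ * l)) := by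
        unfold edgelessBound
        gcongr ?_ * (?_ * ?_)
        exact pow_le_pow_of_le_one (by positivity) ratio_le_one (by gcongr)
    _ = n.choose k * n.choose l * (k / (n + 1)) ^ (2 * k) *
          ((l + s) / (n + 1 + s)) ^ (d₂ * l) := by ring
    _ ≤ l * k / (n + 1) ^ 2 * ((n + 1) / l) ^ (2 * l) *
          ((l + s) / (n + 1 + s)) ^ (d₂ * l) := by
        gcongr ?_ * _
        exact choose_mul_choose_mul_pow_le h hl
    _ = l * k / (n + 1) ^ 2 * (((n + 1) / l) ^ 2 * ((l + s) / (n + 1 + s)) ^ d₂) ^ l := by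
        rw [mul_pow, ← pow_mul, ← pow_mul, mul_assoc]

theorem sq_mul_pow_pow_le_exp {d l : ℕ} {s N : ℝ} (hd : 3 ≤ d) (hs : 0 ≤ s) (hl : 0 < l)
    (hlN : l ≤ N) :
    ((N / l) ^ 2 * ((l + s) / (N + s)) ^ d) ^ l ≤
      Real.exp (-((l - 2 * s) / (N + s)) * (N - l)) := by
  have l_pos : (0 : ℝ) < l := mod_cast hl
  have N_pos : 0 < N := l_pos.trans_le hlN
  have Ns_pos : 0 < N + s := by positivity
  have ratio_le_one : (l + s) / (N + s) ≤ 1 := by rw [div_le_one Ns_pos]; gcongr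
  have ratio_le_exp : (l + s) / (N + s) ≤ Real.exp (-((N - l) / (N + s))) :=
    calc (l + s) / (N + s) = -((N - l) / (N + s)) + 1 := by field_simp; ring
      _ ≤ _ := Real.add_one_le_exp _
  have mul_ratio_le_exp :
      N / l * ((l + s) / (N + s)) ≤ Real.exp (s * (N - l) / (l * (N + s))) :=
    calc N / l * ((l + s) / (N + s)) = s * (N - l) / (l * (N + s)) + 1 := by field_simp; ring
      _ ≤ _ := Real.add_one_le_exp _
  -- `N / l * ((l + s) / (N + s))` is close to `1`: two of the `d ≥ 3` factors compensate the
  -- number of pairs `(A, B)`, the third gives the decay.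
  calc ((N / l) ^ 2 * ((l + s) / (N + s)) ^ d) ^ l
      ≤ ((N / l) ^ 2 * ((l + s) / (N + s)) ^ 3) ^ l := by
        gcongr ((N / l) ^ 2 * ?_) ^ l
        exact pow_le_pow_of_le_one (by positivity) ratio_le_one hd
    _ = ((N / l * ((l + s) / (N + s))) ^ 2 * ((l + s) / (N + s))) ^ l := by ring
    _ ≤ (Real.exp (s * (N - l) / (l * (N + s))) ^ 2 *
          Real.exp (-((N - l) / (N + s)))) ^ l := by gcongr
    _ = Real.exp (-((l - 2 * s) / (N + s)) * (N - l)) := by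
        rw [← Real.exp_nat_mul, ← Real.exp_add, ← Real.exp_nat_mul]
        congr 1
        field_simp
        ring

theorem sq_mul_pow_pow_le_exp_pow {d k l : ℕ} {s N δ : ℝ} (hd : 3 ≤ d) (hs : 0 ≤ s) (hl : 0 < l)
    (hkl : k + l = N) (hsN : s ≤ δ / 4 * N) (hlN : δ * N ≤ l) :
    ((N / l) ^ 2 * ((l + s) / (N + s)) ^ d) ^ l ≤ Real.exp (-(δ / 4)) ^ k := by
  have l_le_N : (l : ℝ) ≤ N := by linarith [(k.cast_nonneg : (0 : ℝ) ≤ k)]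
  have N_pos : 0 < N := (Nat.cast_pos.2 hl).trans_le l_le_N
  have rate_le : δ / 4 ≤ (l - 2 * s) / (N + s) := by
    have : s ≤ N := by linarith
    rw [le_div_iff₀ (by positivity)]
    have δ_nonneg : 0 ≤ δ := by
      by_contra! hδ
      nlinarith
    nlinarith
  calc ((N / l) ^ 2 * ((l + s) / (N + s)) ^ d) ^ l
      ≤ Real.exp (-((l - 2 * s) / (N + s)) * (N - l)) := sq_mul_pow_pow_le_exp hd hs hl l_le_N
    _ ≤ Real.exp (-(δ / 4) * (N - l)) := by
        gcongr
    _ = Real.exp (-(δ / 4)) ^ k := by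
        rw [← hkl, add_sub_cancel_right, mul_comm, Real.exp_nat_mul]

theorem sq_mul_pow_le_half_add {d l : ℕ} {s N M : ℝ} (hd : 3 ≤ d) (hs : 0 ≤ s) (hl : 0 < l)
    (hN : 0 < N) (hsN : N ^ 2 * (s / N) ^ d ≤ M) (hlN : l ≤ (1 / 2) ^ d * N) :
    (N / l) ^ 2 * ((l + s) / (N + s)) ^ d ≤ 1 / 2 + 2 ^ (d - 1) * M / l := by
  have l_ge_one : (1 : ℝ) ≤ l := mod_cast hl
  have ratio_le : l / N ≤ (1 / 2 : ℝ) ^ d := (div_le_iff₀ hN).2 hlN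
  have ratio_le_one : l / N ≤ 1 := ratio_le.trans (pow_le_one₀ (by norm_num) (by norm_num))
  have M_nonneg : 0 ≤ M := hsN.trans' (by positivity)
  have ratio_pow_le : (N / l) ^ 2 * (l / N) ^ d ≤ (1 / 2 : ℝ) ^ d :=
    calc (N / l) ^ 2 * (l / N) ^ d ≤ (N / l) ^ 2 * (l / N) ^ 3 := by
          gcongr (N / l) ^ 2 * ?_
          exact pow_le_pow_of_le_one (by positivity) ratio_le_one hd
      _ = l / N := by field_simp
      _ ≤ (1 / 2) ^ d := ratio_le
  have straggler_pow_le : (N / l) ^ 2 * (s / N) ^ d ≤ M / l :=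
    calc (N / l) ^ 2 * (s / N) ^ d = N ^ 2 * (s / N) ^ d / l ^ 2 := by ring
      _ ≤ M / l := by
          gcongr
          exact le_self_pow₀ l_ge_one two_ne_zero
  have two_pow_pred : (2 : ℝ) ^ (d - 1) * (1 / 2) ^ d = 1 / 2 := by
    obtain ⟨d, rfl⟩ := Nat.exists_eq_add_of_le' (Nat.one_le_of_lt hd)
    rw [Nat.add_sub_cancel, pow_succ, ← mul_assoc, ← mul_pow]
    norm_num
  calc (N / l) ^ 2 * ((l + s) / (N + s)) ^ d
      ≤ (N / l) ^ 2 * ((l + s) / N) ^ d := by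
        gcongr
        linarith
    _ = (N / l) ^ 2 * (l / N + s / N) ^ d := by rw [add_div]
    _ ≤ (N / l) ^ 2 * (2 ^ (d - 1) * ((l / N) ^ d + (s / N) ^ d)) := by
        gcongr
        exact add_pow_le (by positivity) (by positivity) d
    _ = 2 ^ (d - 1) * ((N / l) ^ 2 * (l / N) ^ d + (N / l) ^ 2 * (s / N) ^ d) := by ring
    _ ≤ 2 ^ (d - 1) * ((1 / 2) ^ d + M / l) := by gcongr
    _ = 1 / 2 + 2 ^ (d - 1) * M / l := by rw [mul_add, two_pow_pred, mul_div_assoc]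

theorem sq_mul_pow_pow_le_half_pow {d l : ℕ} {s N M : ℝ} (hd : 3 ≤ d) (hs : 0 ≤ s) (hl : 0 < l)
    (hN : 0 < N) (hsN : N ^ 2 * (s / N) ^ d ≤ M) (hlN : l ≤ (1 / 2) ^ d * N) :
    ((N / l) ^ 2 * ((l + s) / (N + s)) ^ d) ^ l ≤ Real.exp (2 ^ d * M) * (1 / 2) ^ l := by
  have two_mul_two_pow : (2 : ℝ) * 2 ^ (d - 1) = 2 ^ d := by
    rw [← pow_succ', Nat.sub_add_cancel (by omega)]
  calc ((N / l) ^ 2 * ((l + s) / (N + s)) ^ d) ^ l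
      ≤ (1 / 2 + 2 ^ (d - 1) * M / l) ^ l := by
        gcongr
        exact sq_mul_pow_le_half_add hd hs hl hN hsN hlN
    _ = (2 ^ d * M / l + 1) ^ l * (1 / 2) ^ l := by
        rw [← mul_pow, ← two_mul_two_pow]
        ring
    _ ≤ Real.exp (2 ^ d * M / l) ^ l * (1 / 2) ^ l := by
        have M_nonneg : 0 ≤ M := hsN.trans' (by positivity)
        gcongr
        exact Real.add_one_le_exp _
    _ = Real.exp (2 ^ d * M) * (1 / 2) ^ l := by
        rw [← Real.exp_nat_mul, mul_div_cancel₀ _ (by positivity)]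

theorem edgelessBound_le {d₁ d₂ n s k l : ℕ} {M : ℝ} (hd₁ : 2 ≤ d₁) (hd₂ : 3 ≤ d₂)
    (h : k + l = n + 1) (hs : s ≤ (1 / 2) ^ d₂ / 4 * (n + 1 : ℝ))
    (hM : (n + 1 : ℝ) ^ 2 * (s / (n + 1)) ^ d₂ ≤ M) :
    edgelessBound d₁ d₂ n s k l ≤
      (k * Real.exp (-((1 / 2) ^ d₂ / 4)) ^ k +
        Real.exp (2 ^ d₂ * M) * (l * (1 / 2) ^ l)) / (n + 1) := by
  obtain rfl | hl := l.eq_zero_or_pos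
  · rw [add_zero] at h
    simp only [h, edgelessBound, Nat.choose_succ_self]
    simp only [Nat.cast_zero, zero_mul, mul_zero, add_zero]
    positivity
  have k_add_l : (k + l : ℝ) = n + 1 := mod_cast h
  have k_le : (k : ℝ) ≤ n + 1 := by exact_mod_cast (by omega : k ≤ n + 1)
  have l_le : (l : ℝ) ≤ n + 1 := by exact_mod_cast (by omega : l ≤ n + 1)
  refine (edgelessBound_le_mul_pow hd₁ d₂ s h hl).trans ?_
  obtain hlarge | hsmall := le_total ((1 / 2) ^ d₂ * (n + 1 : ℝ)) l
  · calc _ ≤ l * k / (n + 1 : ℝ) ^ 2 * Real.exp (-((1 / 2) ^ d₂ / 4)) ^ k := by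
          gcongr
          exact sq_mul_pow_pow_le_exp_pow hd₂ s.cast_nonneg hl k_add_l hs hlarge
      _ = l / (n + 1) * (k * Real.exp (-((1 / 2) ^ d₂ / 4)) ^ k / (n + 1)) := by
          field_simp
      _ ≤ k * Real.exp (-((1 / 2) ^ d₂ / 4)) ^ k / (n + 1) :=
          mul_le_of_le_one_left (by positivity) (div_le_one_of_le₀ l_le (by positivity))
      _ ≤ _ := by
          gcongr
          exact le_add_of_nonneg_right (by positivity)
  · calc _ ≤ l * k / (n + 1 : ℝ) ^ 2 * (Real.exp (2 ^ d₂ * M) * (1 / 2) ^ l) := by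
          gcongr
          exact sq_mul_pow_pow_le_half_pow hd₂ s.cast_nonneg hl (by positivity) hM hsmall
      _ = k / (n + 1) * (Real.exp (2 ^ d₂ * M) * (l * (1 / 2) ^ l) / (n + 1)) := by
          field_simp
      _ ≤ Real.exp (2 ^ d₂ * M) * (l * (1 / 2) ^ l) / (n + 1) :=
          mul_le_of_le_one_left (by positivity) (div_le_one_of_le₀ k_le (by positivity))
      _ ≤ _ := by
          gcongr
          exact le_add_of_nonneg_left (by positivity)

theorem sum_antidiagonal_fst_mul_geometric_le {r : ℝ} (h₀ : 0 ≤ r) (h₁ : r < 1) (n : ℕ) :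
    ∑ p ∈ antidiagonal n, (p.1 : ℝ) * r ^ p.1 ≤ r / (1 - r) ^ 2 := by
  rw [Nat.sum_antidiagonal_eq_sum_range_succ_mk]
  exact sum_le_hasSum _ (fun k _ => by positivity)
    (hasSum_coe_mul_geometric_of_norm_lt_one (by rwa [Real.norm_of_nonneg h₀]))

theorem sum_edgelessBound_le {d₁ d₂ n s : ℕ} {M : ℝ} (hd₁ : 2 ≤ d₁) (hd₂ : 3 ≤ d₂)
    (hs : s ≤ (1 / 2) ^ d₂ / 4 * (n + 1 : ℝ)) (hM : (n + 1 : ℝ) ^ 2 * (s / (n + 1)) ^ d₂ ≤ M) :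
    ∑ p ∈ antidiagonal (n + 1), edgelessBound d₁ d₂ n s p.1 p.2 ≤
      (Real.exp (-((1 / 2) ^ d₂ / 4)) / (1 - Real.exp (-((1 / 2) ^ d₂ / 4))) ^ 2 +
        2 * Real.exp (2 ^ d₂ * M)) / (n + 1) := by
  have sum_snd_le : ∑ p ∈ antidiagonal (n + 1), (p.2 : ℝ) * (1 / 2) ^ p.2 ≤ 2 := by
    rw [← Nat.sum_antidiagonal_swap]
    exact (sum_antidiagonal_fst_mul_geometric_le (by norm_num) (by norm_num) (n + 1)).trans_eq
      (by norm_num)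
  calc ∑ p ∈ antidiagonal (n + 1), edgelessBound d₁ d₂ n s p.1 p.2
      ≤ ∑ p ∈ antidiagonal (n + 1), (p.1 * Real.exp (-((1 / 2) ^ d₂ / 4)) ^ p.1 +
          Real.exp (2 ^ d₂ * M) * (p.2 * (1 / 2) ^ p.2)) / (n + 1 : ℝ) :=
        sum_le_sum fun p hp =>
          edgelessBound_le hd₁ hd₂ (HasAntidiagonal.mem_antidiagonal.1 hp) hs hM
    _ = (∑ p ∈ antidiagonal (n + 1), p.1 * Real.exp (-((1 / 2) ^ d₂ / 4)) ^ p.1 +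
          Real.exp (2 ^ d₂ * M) * ∑ p ∈ antidiagonal (n + 1), (p.2 : ℝ) * (1 / 2) ^ p.2) /
            (n + 1 : ℝ) := by rw [← sum_div, sum_add_distrib, mul_sum]
    _ ≤ _ := by
        rw [mul_comm 2]
        gcongr
        exact sum_antidiagonal_fst_mul_geometric_le (Real.exp_pos _).le
          (Real.exp_lt_one_iff.2 (by simp)) _

theorem le_mul_of_sq_mul_div_pow_le {d : ℕ} {s N M ε : ℝ} (hd : d ≠ 0) (hN : 0 < N)
    (hε : 0 < ε) (hM : N ^ 2 * (s / N) ^ d ≤ M) (hMN : M / ε ^ d ≤ N ^ 2) : s ≤ ε * N := by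
  rw [← div_le_iff₀ hN]
  refine le_of_pow_le_pow_left₀ hd hε.le (le_of_mul_le_mul_left ?_ (pow_pos hN 2))
  calc N ^ 2 * (s / N) ^ d ≤ M := hM
    _ ≤ N ^ 2 * ε ^ d := (div_le_iff₀ (by positivity)).1 hMN

theorem exists_sum_edgelessBound_le {d₁ d₂ : ℕ} (hd₁ : 2 ≤ d₁) (hd₂ : 3 ≤ d₂) (M : ℝ) :
    ∃ C : ℝ, 0 < C ∧ ∃ N : ℕ, ∀ n : ℕ, N ≤ n → ∀ s : ℕ,
      (n + 1 : ℝ) ^ 2 * (s / (n + 1)) ^ d₂ ≤ M →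
        ∑ p ∈ antidiagonal (n + 1), edgelessBound d₁ d₂ n s p.1 p.2 ≤ C / (n + 1) := by
  obtain ⟨N, hN⟩ := exists_nat_ge (M / ((1 / 2) ^ d₂ / 4) ^ d₂)
  refine ⟨_, ?_, N, fun n hn s hM => sum_edgelessBound_le hd₁ hd₂
    (le_mul_of_sq_mul_div_pow_le (by omega) (by positivity) (by positivity) hM ?_) hM⟩
  · positivity
  · calc M / ((1 / 2) ^ d₂ / 4) ^ d₂ ≤ N := hN
      _ ≤ n + 1 := by exact_mod_cast hn.trans n.le_succ
      _ ≤ (n + 1 : ℝ) ^ 2 := le_self_pow₀ (by linarith [(n.cast_nonneg : (0 : ℝ) ≤ n)]) two_ne_zero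

theorem sq_mul_div_pow_le_of_le_mul_rpow {α K x s : ℝ} {d : ℕ} (hx : 1 ≤ x) (hs : 0 ≤ s)
    (hd : 2 ≤ d * (1 - α)) (hsx : s ≤ K * x ^ α) : x ^ 2 * (s / x) ^ d ≤ K ^ d := by
  have x_pos : 0 < x := by linarith
  have K_nonneg : 0 ≤ K := nonneg_of_mul_nonneg_left (hs.trans hsx) (by positivity)
  calc x ^ 2 * (s / x) ^ d ≤ x ^ 2 * (K * x ^ α / x) ^ d := by gcongr
    _ = K ^ d * x ^ (2 - d * (1 - α)) := by
        rw [mul_div_assoc, ← Real.rpow_sub_one x_pos.ne', mul_pow, ← Real.rpow_mul_natCast x_pos.le,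
          mul_left_comm, ← Real.rpow_natCast x 2, ← Real.rpow_add x_pos]
        push_cast
        ring_nf
    _ ≤ K ^ d := mul_le_of_le_one_right (by positivity)
        (Real.rpow_le_one_of_one_le_of_nonpos hx (by linarith))

theorem stmt_18_general {α : ℝ} (hα : α ∈ Set.Ioo (0 : ℝ) 1) (K : ℝ) {d₁ d₂ : ℕ} (hd₁ : 2 ≤ d₁)
    (hd₂ : 2 / (1 - α) ≤ d₂) :
    ∃ C : ℝ, 0 < C ∧ ∃ N : ℕ, ∀ n : ℕ, N ≤ n → ∀ s : ℕ, (s : ℝ) ≤ K * (n : ℝ) ^ α →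
      ∀ {ι κ β : Type*} [Fintype ι] [Fintype κ] [Fintype β] [DecidableEq ι] [DecidableEq κ]
        (e : ι ↪ β), Fintype.card ι = n → Fintype.card κ = n → Fintype.card β = n + s →
        (1 - C / n) * (Fintype.card (SubsetFamily ι κ d₁ × SubsetFamily κ β d₂) : ℝ) ≤
          #{ω : SubsetFamily ι κ d₁ × SubsetFamily κ β d₂ | HasPerfectMatching e ω.1.1 ω.2.1} := by
  have α_lt_one : 0 < 1 - α := sub_pos.2 hα.2
  have three_le_d₂ : 3 ≤ d₂ := by
    have : (2 : ℝ) < d₂ := hd₂.trans_lt' ((lt_div_iff₀ α_lt_one).2 (by linarith [hα.1]))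
    exact_mod_cast this
  obtain ⟨C, C_pos, N, sum_le⟩ := exists_sum_edgelessBound_le hd₁ three_le_d₂ (K ^ d₂)
  refine ⟨C, C_pos, N + 1, fun n hn s hs ι κ β _ _ _ _ _ e hι hκ hβ => ?_⟩
  have n_pos : (0 : ℝ) < n := by exact_mod_cast (by omega : 0 < n)
  have K_nonneg : 0 ≤ K := nonneg_of_mul_nonneg_left (s.cast_nonneg.trans hs) (by positivity)
  have straggler_bound : (n + 1 : ℝ) ^ 2 * (s / (n + 1)) ^ d₂ ≤ K ^ d₂ := by
    refine sq_mul_div_pow_le_of_le_mul_rpow (by linarith) s.cast_nonneg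
      ((div_le_iff₀ α_lt_one).1 hd₂) (hs.trans ?_)
    gcongr
    exacts [hα.1.le, by linarith]
  refine one_sub_mul_card_le_card_filter
    ((card_not_hasPerfectMatching_le e d₁ d₂ hι hκ hβ).trans ?_)
  gcongr
  calc ∑ p ∈ antidiagonal (n + 1), edgelessBound d₁ d₂ n s p.1 p.2
      ≤ C / (n + 1) := sum_le n (by omega) s straggler_bound
    _ ≤ C / n := by gcongr; linarith

end

/-- the (2, 2/(1−α))-cross code with s = O(n^α) stragglers.  Let α ∈ (0,1)
with d₂ = 2/(1−α) an integer.  There are C > 0 and N such that for all n ≥ N and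
0 ≤ s ≤ n^α (m = n + s): if each left vertex i of an n+n bipartite graph picks a uniform
2-subset L_i of the n right vertices and each right vertex j picks a uniform d₂-subset
R_j of the m workers, with an edge i–j iff j ∈ L_i or i ∈ R_j (left vertices identified
with the first n of the m workers), then the graph has a perfect matching with probability
at least 1 − C/n (stated by counting). -/
theorem stmt_18 (α : ℝ) (hα : α ∈ Set.Ioo (0 : ℝ) 1) (d₂ : ℕ)
    (hd₂ : (d₂ : ℝ) = 2 / (1 - α)) :
    ∃ C : ℝ, 0 < C ∧ ∃ N : ℕ, ∀ n : ℕ, N ≤ n → ∀ s : ℕ,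
      (s : ℝ) ≤ (n : ℝ) ^ α →
      (1 - C / n) *
          (Fintype.card
            ({f : Fin n → Finset (Fin n) // ∀ i, (f i).card = 2} ×
              {g : Fin n → Finset (Fin (n + s)) // ∀ j, (g j).card = d₂}) : ℝ) ≤
        ((Finset.univ.filter fun ω :
              {f : Fin n → Finset (Fin n) // ∀ i, (f i).card = 2} ×
                {g : Fin n → Finset (Fin (n + s)) // ∀ j, (g j).card = d₂} =>
            ∃ σ : Equiv.Perm (Fin n), ∀ i : Fin n,
              σ i ∈ ω.1.val i ∨ Fin.castAdd s i ∈ ω.2.val (σ i)).card : ℝ) := by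
  obtain ⟨C, C_pos, N, good_le⟩ := stmt_18_general hα 1 le_rfl hd₂.ge
  refine ⟨C, C_pos, N, fun n hn s hs => ?_⟩
  convert good_le n hn s (by simpa using hs) (Fin.castAddEmb s) (Fintype.card_fin n)
    (Fintype.card_fin n) (Fintype.card_fin (n + s))
  rfl
end
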